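/- arXiv:2007.05195 — 3 statements merged into one kernel-verified Lean document; each statement's English description precedes it below -/
import Mathlib

section
/- Let S = (V₁,V₂) be an edge-cut of a 2-edge-connected finite multigraph G with 2 ≤ |S| ≤ 3, let Hᵢ = G[Vᵢ] be the subgraph induced by Vᵢ, and for i = 1,2 let Gᵢ be the multigraph obtained from G by contracting all edges of H_{3−i}. Then (q−1)(q−2)⋯(q−|S|+1) · F(G,q) = F(G₁,q)·F(G₂,q) as polynomials in q. -/
/-- A finite multigraph on vertex type `V` with edge type `E`: each edge `e` has two
(possibly equal) endpoints `fst e` and `snd e`. -/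
structure Multigraph (V E : Type) where
  fst : E → V
  snd : E → V

namespace Multigraph

variable {V E : Type}

/-- `a` and `b` are joined by some edge belonging to the edge set `F`. -/
def edgeRelOn (G : Multigraph V E) (F : Set E) (a b : V) : Prop :=
  ∃ e ∈ F, (G.fst e = a ∧ G.snd e = b) ∨ (G.fst e = b ∧ G.snd e = a)

/-- Reachability in the spanning subgraph `(V, F)`. -/
def Reach (G : Multigraph V E) (F : Set E) : V → V → Prop :=
  Relation.EqvGen (G.edgeRelOn F)

/-- The setoid on `V` whose classes are the connected components of the
spanning subgraph `(V, F)`. -/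
def reachSetoid (G : Multigraph V E) (F : Set E) : Setoid V :=
  Relation.EqvGen.setoid (G.edgeRelOn F)

/-- The number of connected components of the spanning subgraph `(V, F)`. -/
noncomputable def ncomp (G : Multigraph V E) (F : Set E) : ℕ :=
  Nat.card (Quotient (G.reachSetoid F))

/-- The number of connected components of `G`. -/
noncomputable def numComponents (G : Multigraph V E) : ℕ :=
  G.ncomp Set.univ

/-- `G` is connected. -/
def Connected (G : Multigraph V E) : Prop :=
  G.numComponents = 1

/-- An edge is a bridge if deleting it increases the number of connected components. -/
def IsBridge (G : Multigraph V E) (e : E) : Prop :=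
  G.numComponents < G.ncomp {e' | e' ≠ e}

/-- `G` has no bridge. -/
def Bridgeless (G : Multigraph V E) : Prop :=
  ∀ e, ¬ G.IsBridge e

/-- `G` has no loops. -/
def Loopless (G : Multigraph V E) : Prop :=
  ∀ e, G.fst e ≠ G.snd e

/-- Deleting a set `S` of vertices (and all edges meeting `S`). -/
def deleteVerts (G : Multigraph V E) (S : Set V) :
    Multigraph {v // v ∉ S} {e // G.fst e ∉ S ∧ G.snd e ∉ S} where
  fst := fun e => ⟨G.fst e.1, e.2.1⟩
  snd := fun e => ⟨G.snd e.1, e.2.2⟩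

/-- A cut-vertex: a vertex whose deletion increases the number of components. -/
def IsCutVertex (G : Multigraph V E) (x : V) : Prop :=
  G.numComponents < (G.deleteVerts {x}).numComponents

/-- A graph is non-separable if it has at most one vertex and at most one edge, or it is
connected, loopless and has no cut-vertex. -/
def NonSeparable (G : Multigraph V E) : Prop :=
  (Nat.card V ≤ 1 ∧ Nat.card E ≤ 1) ∨
    (G.Connected ∧ G.Loopless ∧ ∀ x, ¬ G.IsCutVertex x)

/-- The degree of a vertex, counted with edge multiplicity; a loop contributes `2`. -/
noncomputable def degree (G : Multigraph V E) (v : V) : ℕ :=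
  Nat.card {e | G.fst e = v} + Nat.card {e | G.snd e = v}

/-- The flow polynomial `F(G,q) = ∑_{E'⊆E} (−1)^{|E|−|E'|} q^{|E'|+c(E')−|V|}`,
where `c(E')` is the number of connected components of the spanning subgraph `(V,E')`. -/
noncomputable def flowPoly (G : Multigraph V E) [Finite V] [Finite E] : Polynomial ℝ :=
  letI : Fintype E := Fintype.ofFinite E
  ∑ E' : Finset E, (-1 : Polynomial ℝ) ^ (Nat.card E - E'.card) *
    Polynomial.X ^ (E'.card + G.ncomp ↑E' - Nat.card V)

/-- A subgraph of a multigraph: a set of vertices and a set of edges with both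
endpoints among those vertices. -/
structure Subgraph (G : Multigraph V E) where
  verts : Set V
  edges : Set E
  fst_mem : ∀ ⦃e⦄, e ∈ edges → G.fst e ∈ verts
  snd_mem : ∀ ⦃e⦄, e ∈ edges → G.snd e ∈ verts

/-- A subgraph, viewed as a multigraph in its own right. -/
def Subgraph.toMultigraph {G : Multigraph V E} (H : G.Subgraph) :
    Multigraph H.verts H.edges where
  fst := fun e => ⟨G.fst e.1, H.fst_mem e.2⟩
  snd := fun e => ⟨G.snd e.1, H.snd_mem e.2⟩

/-- `H` is a connected component of `G`: its vertex set is the set of vertices reachable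
from some vertex, and its edges are all the edges of `G` joining its vertices. -/
def IsComponent {G : Multigraph V E} (H : G.Subgraph) : Prop :=
  (∃ v ∈ H.verts, ∀ u, u ∈ H.verts ↔ G.Reach Set.univ v u) ∧
    ∀ e, e ∈ H.edges ↔ (G.fst e ∈ H.verts ∧ G.snd e ∈ H.verts)

/-- `H` is a block of `G`: a maximal non-separable subgraph. -/
def IsBlock {G : Multigraph V E} (H : G.Subgraph) : Prop :=
  H.toMultigraph.NonSeparable ∧
    ∀ H' : G.Subgraph, H'.toMultigraph.NonSeparable →
      H.verts ⊆ H'.verts → H.edges ⊆ H'.edges → H' = H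

/-- A trivial block: a single vertex and no edges. -/
def Subgraph.IsTrivial {G : Multigraph V E} (H : G.Subgraph) : Prop :=
  (∃ v, H.verts = {v}) ∧ H.edges = ∅

/-- An orientation of a multigraph: each edge is given a tail and a head,
consistent with its two endpoints. -/
structure Orientation (G : Multigraph V E) where
  tail : E → V
  head : E → V
  consistent : ∀ e, (tail e = G.fst e ∧ head e = G.snd e) ∨
    (tail e = G.snd e ∧ head e = G.fst e)

open Classical in
/-- A `Γ`-flow on an orientation `D`: at every vertex, the sum of the values on
the arcs with that tail equals the sum of the values on the arcs with that head. -/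
noncomputable def Orientation.IsFlow {G : Multigraph V E} [Fintype E]
    (D : G.Orientation) {Γ : Type} [AddCommGroup Γ] (φ : E → Γ) : Prop :=
  ∀ v : V, ∑ e ∈ Finset.univ.filter (fun e => D.tail e = v), φ e =
    ∑ e ∈ Finset.univ.filter (fun e => D.head e = v), φ e

/-- Deleting an edge. -/
def deleteEdge (G : Multigraph V E) (e₀ : E) : Multigraph V {e // e ≠ e₀} where
  fst := fun e => G.fst e.1
  snd := fun e => G.snd e.1

/-- Adding a new edge joining `x` and `y`. -/
def addEdge (G : Multigraph V E) (x y : V) : Multigraph V (E ⊕ Unit) where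
  fst := Sum.elim G.fst fun _ => x
  snd := Sum.elim G.snd fun _ => y

/-- Contracting a set `F` of edges: vertices joined through `F` are identified,
and the edges of `F` are removed. -/
def contract (G : Multigraph V E) (F : Set E) :
    Multigraph (Quotient (G.reachSetoid F)) {e // e ∉ F} where
  fst := fun e => Quotient.mk _ (G.fst e.1)
  snd := fun e => Quotient.mk _ (G.snd e.1)

/-- The number of proper colourings of the vertices of `G` with `n` colours. -/
noncomputable def properColorings (G : Multigraph V E) (n : ℕ) : ℕ :=
  Nat.card {f : V → Fin n // ∀ e, f (G.fst e) ≠ f (G.snd e)}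

/-- An isomorphism of multigraphs. -/
structure Iso {V' E' : Type} (G : Multigraph V E) (G' : Multigraph V' E') where
  vmap : V ≃ V'
  emap : E ≃ E'
  ends : ∀ e, (G'.fst (emap e) = vmap (G.fst e) ∧ G'.snd (emap e) = vmap (G.snd e)) ∨
    (G'.fst (emap e) = vmap (G.snd e) ∧ G'.snd (emap e) = vmap (G.fst e))

open Classical in
/-- Subdividing the edge `e₀`: it is replaced by a path of length two through a new vertex. -/
noncomputable def subdivide (G : Multigraph V E) (e₀ : E) :
    Multigraph (V ⊕ Unit) (E ⊕ Unit) where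
  fst := Sum.elim (fun e => Sum.inl (G.fst e)) fun _ => Sum.inr ()
  snd := Sum.elim (fun e => if e = e₀ then Sum.inr () else Sum.inl (G.snd e))
    fun _ => Sum.inl (G.snd e₀)

/-- `G` is a subdivision of `H`. -/
inductive IsSubdivisionOf :
    {V E V' E' : Type} → Multigraph V E → Multigraph V' E' → Prop
  | of_iso {V E V' E'} {G : Multigraph V E} {H : Multigraph V' E'} :
      Iso G H → IsSubdivisionOf G H
  | step {V E V' E'} {G : Multigraph V E} {H : Multigraph V' E'} (e : E) :
      IsSubdivisionOf G H → IsSubdivisionOf (G.subdivide e) H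
  | iso_left {V₁ E₁ V₂ E₂ V' E'} {G₁ : Multigraph V₁ E₁} {G₂ : Multigraph V₂ E₂}
      {H : Multigraph V' E'} :
      Iso G₁ G₂ → IsSubdivisionOf G₂ H → IsSubdivisionOf G₁ H

/-- A multigraph is 3-connected if it has at least 4 vertices and remains connected
after deleting any set of fewer than 3 vertices. -/
def ThreeConnected (G : Multigraph V E) : Prop :=
  4 ≤ Nat.card V ∧ ∀ S : Set V, S.ncard < 3 → (G.deleteVerts S).Connected

/-- `G` is (isomorphic to) the multigraph `Z_k` with two vertices joined by `k`
parallel edges. -/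
def IsZk (G : Multigraph V E) (k : ℕ) : Prop :=
  Nat.card V = 2 ∧ Nat.card E = k ∧ G.Loopless

/-- `G` is essentially 3-connected: a subdivision of a 3-connected graph,
or `Z_k` for some `k ≥ 3`. -/
def EssentiallyThreeConnected (G : Multigraph V E) : Prop :=
  (∃ (V' E' : Type) (H : Multigraph V' E'), H.ThreeConnected ∧ G.IsSubdivisionOf H) ∨
    ∃ k, 3 ≤ k ∧ G.IsZk k

end Multigraph

namespace Multigraph
namespace FlowAux

/-- Flows in characteristic two, tested against vertex functions. -/
def IsFl {V E : Type} [Fintype E] {Γ : Type} [AddCommGroup Γ] [Module (ZMod 2) Γ]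
    (G : Multigraph V E) (φ : E → Γ) : Prop :=
  ∀ g : V → ZMod 2, ∑ e, (g (G.fst e) + g (G.snd e)) • φ e = 0

theorem exists_linearEquiv {ι Γ : Type} [AddCommGroup Γ] [Module (ZMod 2) Γ] [Finite Γ]
    (x y : ι → Γ) (hx : LinearIndependent (ZMod 2) x) (hy : LinearIndependent (ZMod 2) y) :
    ∃ σ : Γ ≃ₗ[ZMod 2] Γ, ∀ i, σ (x i) = y i := by
  have : FiniteDimensional (ZMod 2) Γ := Module.Finite.of_finite
  obtain ⟨σ, hσ⟩ := Submodule.exists_linearEquiv_restrict_eq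
    (hx.linearCombinationEquiv.symm.trans hy.linearCombinationEquiv)
  refine ⟨σ, fun i => ?_⟩
  have h := hσ (hx.linearCombinationEquiv (Finsupp.single i 1))
  simpa using h.symm

theorem zmod2_cases (a : ZMod 2) : a = 0 ∨ a = 1 := by
  revert a; decide

theorem trans_two {Γ : Type} [AddCommGroup Γ] [Module (ZMod 2) Γ] [Finite Γ]
    (x y : Fin 2 → Γ) (hx : ∀ i, x i ≠ 0) (hx0 : ∑ i, x i = 0)
    (hy : ∀ i, y i ≠ 0) (hy0 : ∑ i, y i = 0) :
    ∃ σ : Γ ≃ₗ[ZMod 2] Γ, ∀ i, σ (x i) = y i := by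
  obtain ⟨σ, hσ⟩ := exists_linearEquiv (fun _ : Unit => x 0) (fun _ : Unit => y 0)
    (LinearIndependent.of_subsingleton () (hx 0)) (LinearIndependent.of_subsingleton () (hy 0))
  refine ⟨σ, ?_⟩
  have h := hσ ()
  rw [Fin.sum_univ_two] at hx0 hy0
  have h1 : σ (x 1) = y 1 := by
    rw [eq_neg_of_add_eq_zero_right hx0, eq_neg_of_add_eq_zero_right hy0, map_neg, h]
  intro i
  fin_cases i
  · exact h
  · exact h1

theorem indep_pair {Γ : Type} [AddCommGroup Γ] [Module (ZMod 2) Γ]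
    (x : Fin 3 → Γ) (hx : ∀ i, x i ≠ 0) (hx0 : ∑ i, x i = 0) :
    LinearIndependent (ZMod 2) ![x 0, x 1] := by
  rw [Fin.sum_univ_three] at hx0
  rw [LinearIndependent.pair_iff]
  intro s t hst
  rcases zmod2_cases s with rfl | rfl <;> rcases zmod2_cases t with rfl | rfl
  · simp
  · simp at hst; exact absurd hst (hx 1)
  · simp at hst; exact absurd hst (hx 0)
  · simp at hst; rw [hst, zero_add] at hx0; exact absurd hx0 (hx 2)

theorem trans_three {Γ : Type} [AddCommGroup Γ] [Module (ZMod 2) Γ] [Finite Γ]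
    (x y : Fin 3 → Γ) (hx : ∀ i, x i ≠ 0) (hx0 : ∑ i, x i = 0)
    (hy : ∀ i, y i ≠ 0) (hy0 : ∑ i, y i = 0) :
    ∃ σ : Γ ≃ₗ[ZMod 2] Γ, ∀ i, σ (x i) = y i := by
  obtain ⟨σ, hσ⟩ := exists_linearEquiv ![x 0, x 1] ![y 0, y 1] (indep_pair x hx hx0)
    (indep_pair y hy hy0)
  refine ⟨σ, ?_⟩
  have h0 : σ (x 0) = y 0 := hσ 0
  have h1 : σ (x 1) = y 1 := hσ 1
  rw [Fin.sum_univ_three] at hx0 hy0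
  have h2 : σ (x 2) = y 2 := by
    rw [eq_neg_of_add_eq_zero_right hx0, eq_neg_of_add_eq_zero_right hy0, map_neg, map_add, h0, h1]
  intro i
  fin_cases i
  · exact h0
  · exact h1
  · exact h2

theorem card_two {Γ : Type} [AddCommGroup Γ] [Module (ZMod 2) Γ] [Fintype Γ] [DecidableEq Γ] :
    ((Finset.univ.filter (fun x : Fin 2 → Γ => (∀ i, x i ≠ 0) ∧ ∑ i, x i = 0)).card : ℝ)
      = (Fintype.card Γ : ℝ) - 1 := by
  have h : (Finset.univ.filter (fun x : Fin 2 → Γ => (∀ i, x i ≠ 0) ∧ ∑ i, x i = 0)).card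
      = ((Finset.univ : Finset Γ).erase 0).card := by
    refine Finset.card_bij' (fun x _ => x 0) (fun a _ => ![a, a]) ?_ ?_ ?_ ?_
    · intro x hx
      simp at hx
      simp [hx.1]
    · intro a ha
      simp at ha
      simp [ha, ZModModule.add_self]
    · intro x hx
      simp [Fin.sum_univ_two] at hx
      ext i
      fin_cases i
      · rfl
      · have := eq_neg_of_add_eq_zero_right hx.2
        rw [ZModModule.neg_eq_self] at this
        exact this.symm
    · intro a ha
      rfl
  rw [h, Finset.card_erase_of_mem (Finset.mem_univ _), Finset.card_univ,
    Nat.cast_pred Fintype.card_pos]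

theorem card_three {Γ : Type} [AddCommGroup Γ] [Module (ZMod 2) Γ] [Fintype Γ] [DecidableEq Γ] :
    ((Finset.univ.filter (fun x : Fin 3 → Γ => (∀ i, x i ≠ 0) ∧ ∑ i, x i = 0)).card : ℝ)
      = ((Fintype.card Γ : ℝ) - 1) * ((Fintype.card Γ : ℝ) - 2) := by
  have h : (Finset.univ.filter (fun x : Fin 3 → Γ => (∀ i, x i ≠ 0) ∧ ∑ i, x i = 0)).card
      = ((Finset.univ : Finset Γ).erase 0).offDiag.card := by
    refine Finset.card_bij' (fun x _ => (x 0, x 1)) (fun a _ => ![a.1, a.2, a.1 + a.2]) ?_ ?_ ?_ ?_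
    · intro x hx
      simp [Fin.sum_univ_three] at hx
      simp only [Finset.mem_offDiag, Finset.mem_erase, Finset.mem_univ, and_true]
      refine ⟨hx.1 0, hx.1 1, fun h => hx.1 2 ?_⟩
      have h2 := hx.2
      rwa [h, ZModModule.add_self, zero_add] at h2
    · rintro ⟨a, b⟩ ha
      simp only [Finset.mem_offDiag, Finset.mem_erase, Finset.mem_univ, and_true] at ha
      simp only [Finset.mem_filter, Finset.mem_univ, true_and]
      constructor
      · intro i
        fin_cases i
        · exact ha.1
        · exact ha.2.1
        · intro h
          have h : a + b = 0 := h
          apply ha.2.2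
          rw [eq_neg_of_add_eq_zero_left h, ZModModule.neg_eq_self]
      · simp [Fin.sum_univ_three, ZModModule.add_self]
    · intro x hx
      simp [Fin.sum_univ_three] at hx
      ext i
      fin_cases i
      · rfl
      · rfl
      · have := eq_neg_of_add_eq_zero_right hx.2
        rw [ZModModule.neg_eq_self] at this
        exact this.symm
    · intro a ha
      rfl
  rw [h, Finset.offDiag_card, Nat.cast_sub (Nat.le_mul_self _), Nat.cast_mul,
    Finset.card_erase_of_mem (Finset.mem_univ _), Finset.card_univ,
    Nat.cast_pred Fintype.card_pos]
  ring

theorem eqvGen_const {V E α : Type} (G : Multigraph V E) (F : Set E) (g : V → α)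
    (hg : ∀ e ∈ F, g (G.fst e) = g (G.snd e)) {a b : V}
    (h : Relation.EqvGen (G.edgeRelOn F) a b) : g a = g b := by
  induction h with
  | rel a b h =>
    obtain ⟨e, he, h | h⟩ := h
    · rw [← h.1, ← h.2, hg e he]
    · rw [← h.1, ← h.2, hg e he]
  | refl => rfl
  | symm _ _ _ ih => exact ih.symm
  | trans _ _ _ _ _ ih1 ih2 => exact ih1.trans ih2

theorem edge_reach {V E : Type} (G : Multigraph V E) (F : Set E) {e : E} (he : e ∈ F) :
    (Quotient.mk (G.reachSetoid F) (G.fst e)) = Quotient.mk _ (G.snd e) :=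
  Quotient.sound (Relation.EqvGen.rel _ _ ⟨e, he, Or.inl ⟨rfl, rfl⟩⟩)

theorem isFl_contract_iff {V E : Type} (G : Multigraph V E) (F : Set E) [Fintype {e // e ∉ F}]
    {Γ : Type} [AddCommGroup Γ] [Module (ZMod 2) Γ] (φ : {e // e ∉ F} → Γ) :
    IsFl (G.contract F) φ ↔ ∀ g : V → ZMod 2, (∀ e ∈ F, g (G.fst e) = g (G.snd e)) →
      ∑ e : {e // e ∉ F}, (g (G.fst e.1) + g (G.snd e.1)) • φ e = 0 := by
  constructor
  · intro h g hg
    exact h (Quotient.lift g (fun a b hab => eqvGen_const G F g hg hab))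
  · intro h g
    exact h (fun v => g (Quotient.mk _ v)) (fun e he => congrArg g (edge_reach G F he))

/-- The incidence matrix over the field with two elements. -/
noncomputable def inc {V E : Type} [DecidableEq V] (G : Multigraph V E) : Matrix E V (ZMod 2) :=
  fun e v => (if G.fst e = v then 1 else 0) + (if G.snd e = v then 1 else 0)

theorem inc_mulVec {V E : Type} [Fintype V] [DecidableEq V] (G : Multigraph V E)
    (g : V → ZMod 2) (e : E) : (inc G).mulVec g e = g (G.fst e) + g (G.snd e) := by
  simp [inc, Matrix.mulVec, dotProduct, add_mul, Finset.sum_add_distrib]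

theorem finrank_ker_inc {V E : Type} [Fintype V] [Fintype E] [DecidableEq V]
    (G : Multigraph V E) :
    Module.finrank (ZMod 2) (LinearMap.ker (inc G).mulVecLin) = G.numComponents := by
  classical
  let Q := Quotient (G.reachSetoid Set.univ)
  let f : (Q → ZMod 2) →ₗ[ZMod 2] (V → ZMod 2) :=
    LinearMap.funLeft (ZMod 2) (ZMod 2) (Quotient.mk (G.reachSetoid Set.univ))
  have hf : Function.Injective f :=
    LinearMap.funLeft_injective_of_surjective _ _ _ Quotient.mk_surjective
  have hr : LinearMap.range f = LinearMap.ker (inc G).mulVecLin := by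
    ext g
    rw [LinearMap.mem_ker, Matrix.mulVecLin_apply]
    constructor
    · rintro ⟨h, rfl⟩
      ext e
      rw [inc_mulVec]
      have : f h (G.fst e) = f h (G.snd e) := congrArg h (edge_reach G Set.univ (Set.mem_univ e))
      rw [this]
      exact ZModModule.add_self _
    · intro h
      have hg : ∀ e ∈ Set.univ, g (G.fst e) = g (G.snd e) := by
        intro e _
        have := congrFun h e
        rw [inc_mulVec] at this
        rw [eq_neg_of_add_eq_zero_left this, ZModModule.neg_eq_self]
      exact ⟨Quotient.lift g (fun a b hab => eqvGen_const G _ g hg hab), rfl⟩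
  rw [← hr, LinearMap.finrank_range_of_inj hf, Module.finrank_fintype_fun_eq_card]
  exact (Nat.card_eq_fintype_card).symm

theorem isFl_iff_vecMul {V E : Type} [Fintype V] [Fintype E] [DecidableEq V]
    (G : Multigraph V E) (φ : E → ZMod 2) :
    IsFl G φ ↔ φ ∈ LinearMap.ker (inc G).transpose.mulVecLin := by
  rw [LinearMap.mem_ker, Matrix.mulVecLin_apply, Matrix.mulVec_transpose]
  have key : ∀ g : V → ZMod 2, ∑ e, (g (G.fst e) + g (G.snd e)) • φ e
      = (Matrix.vecMul φ (inc G)) ⬝ᵥ g := by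
    intro g
    rw [← Matrix.dotProduct_mulVec]
    simp only [dotProduct, inc_mulVec, smul_eq_mul]
    exact Finset.sum_congr rfl fun e _ => mul_comm _ _
  unfold IsFl
  simp only [key]
  constructor
  · intro h
    exact dotProduct_eq_zero_iff.mp h
  · intro h g
    rw [h, zero_dotProduct]

theorem card_isFl {V E : Type} [Fintype V] [Fintype E] (G : Multigraph V E) (n : ℕ) :
    Nat.card {φ : E → (Fin n → ZMod 2) // IsFl G φ}
      = (2 ^ n) ^ (Nat.card E + G.numComponents - Nat.card V) := by
  classical
  have e1 : {φ : E → (Fin n → ZMod 2) // IsFl G φ} ≃ (Fin n → {φ : E → ZMod 2 // IsFl G φ}) :=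
    { toFun := fun φ i => ⟨fun e => φ.1 e i, fun g => by
        have := congrFun (φ.2 g) i
        simpa using this⟩
      invFun := fun ψ => ⟨fun e i => (ψ i).1 e, fun g => by
        ext i
        have := (ψ i).2 g
        simpa using this⟩
      left_inv := fun φ => rfl
      right_inv := fun ψ => rfl }
  have e2 : {φ : E → ZMod 2 // IsFl G φ} ≃ LinearMap.ker (inc G).transpose.mulVecLin :=
    Equiv.subtypeEquivRight (isFl_iff_vecMul G)
  rw [Nat.card_congr e1, Nat.card_fun, Nat.card_congr e2, Nat.card_fin,
    Module.natCard_eq_pow_finrank (K := ZMod 2), Nat.card_zmod, ← pow_mul, ← pow_mul, mul_comm n]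
  congr 2
  have h1 := LinearMap.finrank_range_add_finrank_ker (inc G).mulVecLin
  have h2 := LinearMap.finrank_range_add_finrank_ker (inc G).transpose.mulVecLin
  have h3 : (inc G).transpose.rank = (inc G).rank := Matrix.rank_transpose _
  unfold Matrix.rank at h3
  rw [finrank_ker_inc] at h1
  rw [Module.finrank_fintype_fun_eq_card] at h1 h2
  rw [Nat.card_eq_fintype_card, Nat.card_eq_fintype_card]
  omega

/-- Keep only the edges of a finset. -/
def restr {V E : Type} (G : Multigraph V E) (T : Finset E) : Multigraph V T where
  fst := fun e => G.fst e.1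
  snd := fun e => G.snd e.1

theorem numComponents_restr {V E : Type} (G : Multigraph V E) (T : Finset E) :
    (restr G T).numComponents = G.ncomp (T : Set E) := by
  have : (restr G T).edgeRelOn Set.univ = G.edgeRelOn (T : Set E) := by
    ext a b
    constructor
    · rintro ⟨e, _, h⟩
      exact ⟨e.1, e.2, h⟩
    · rintro ⟨e, he, h⟩
      exact ⟨⟨e, he⟩, Set.mem_univ _, h⟩
  unfold numComponents ncomp reachSetoid
  rw [this]

theorem sum_subtype_of_zero {E Γ : Type} [Fintype E] [AddCommMonoid Γ] (p : E → Prop)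
    [Fintype {e // p e}] (f : E → Γ) (h : ∀ e, ¬ p e → f e = 0) :
    ∑ e : {e // p e}, f e.1 = ∑ e, f e := by
  refine Fintype.sum_of_injective Subtype.val Subtype.val_injective _ _ ?_ (fun _ => rfl)
  intro e he
  exact h e (fun hp => he ⟨⟨e, hp⟩, rfl⟩)

theorem card_isFl_supp {V E : Type} [Fintype V] [Fintype E] (G : Multigraph V E) (n : ℕ)
    (T : Finset E) :
    Nat.card {φ : E → (Fin n → ZMod 2) // IsFl G φ ∧ ∀ e ∉ T, φ e = 0}
      = (2 ^ n) ^ (T.card + G.ncomp (T : Set E) - Nat.card V) := by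
  classical
  have e1 : {φ : E → (Fin n → ZMod 2) // IsFl G φ ∧ ∀ e ∉ T, φ e = 0} ≃
      {φ : T → (Fin n → ZMod 2) // IsFl (restr G T) φ} :=
    { toFun := fun φ => ⟨fun e => φ.1 e.1, fun g => by
        refine Eq.trans ?_ (φ.2.1 g)
        exact sum_subtype_of_zero (fun e => e ∈ T)
          (fun e => (g (G.fst e) + g (G.snd e)) • φ.1 e)
          (fun e he => by rw [φ.2.2 e he, smul_zero])⟩
      invFun := fun ψ => ⟨fun e => if h : e ∈ T then ψ.1 ⟨e, h⟩ else 0, by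
        constructor
        · intro g
          refine Eq.trans ?_ (ψ.2 g)
          rw [← sum_subtype_of_zero (fun e => e ∈ T)]
          · refine Finset.sum_congr rfl ?_
            rintro ⟨e, he⟩ _
            simp [he, restr]
          · intro e he
            simp [he]
        · intro e he
          simp [he]⟩
      left_inv := by
        rintro ⟨φ, h1, h2⟩
        ext e : 2
        by_cases he : e ∈ T
        · simp [he]
        · simp [he, h2 e he]
      right_inv := by
        rintro ⟨ψ, h⟩
        ext e : 2
        simp }
  rw [Nat.card_congr e1, card_isFl, numComponents_restr]
  simp

theorem eval_flowPoly {V E : Type} [Finite V] [Fintype E] (G : Multigraph V E) (n : ℕ) :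
    (G.flowPoly).eval ((2 : ℝ) ^ n)
      = Nat.card {φ : E → (Fin n → ZMod 2) // IsFl G φ ∧ ∀ e, φ e ≠ 0} := by
  classical
  have := Fintype.ofFinite V
  let Γ := Fin n → ZMod 2
  let W : Finset (E → Γ) := Finset.univ.filter (fun φ => IsFl G φ)
  have hT : ∀ T : Finset E, ((2 : ℝ) ^ n) ^ (T.card + G.ncomp (T : Set E) - Nat.card V)
      = ∑ φ ∈ W, if ∀ e ∉ T, φ e = 0 then (1 : ℝ) else 0 := by
    intro T
    have h := card_isFl_supp G n T
    have h' : ((2 : ℝ) ^ n) ^ (T.card + G.ncomp (T : Set E) - Nat.card V) =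
      ((Nat.card {φ : E → (Fin n → ZMod 2) // IsFl G φ ∧ ∀ e ∉ T, φ e = 0} : ℕ) : ℝ) := by
        rw [h]; push_cast; rfl
    rw [h', Nat.card_eq_fintype_card, Fintype.card_subtype, Finset.sum_boole, Finset.filter_filter]
  have hφ : ∀ φ : E → Γ, ∑ T : Finset E, (-1 : ℝ) ^ (Nat.card E - T.card) *
      (if ∀ e ∉ T, φ e = 0 then (1 : ℝ) else 0) = if ∀ e, φ e ≠ 0 then 1 else 0 := by
    intro φ
    have h1 : (if ∀ e, φ e ≠ 0 then (1 : ℝ) else 0) = ∏ e, (1 + if φ e = 0 then (-1 : ℝ) else 0) := by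
      split_ifs with h
      · simp [h]
      · push Not at h
        obtain ⟨e, he⟩ := h
        exact (Finset.prod_eq_zero (Finset.mem_univ e) (by simp [he])).symm
    rw [h1, Finset.prod_add, Finset.powerset_univ]
    refine Finset.sum_congr rfl fun T _ => ?_
    rw [Finset.prod_const_one, one_mul]
    split_ifs with h
    · rw [Finset.prod_congr rfl (g := fun _ => (-1 : ℝ)) (fun e he => by
        rw [if_pos (h e (by simpa using he))])]
      rw [Finset.prod_const, mul_one, ← Finset.compl_eq_univ_sdiff, Finset.card_compl,
        Nat.card_eq_fintype_card]
    · push Not at h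
      obtain ⟨e, he, he'⟩ := h
      rw [mul_zero]
      exact (Finset.prod_eq_zero (i := e) (by simpa using he) (by simp [he'])).symm
  have hev : (G.flowPoly).eval ((2 : ℝ) ^ n) = ∑ T : Finset E, (-1 : ℝ) ^ (Nat.card E - T.card) *
      ((2 : ℝ) ^ n) ^ (T.card + G.ncomp (T : Set E) - Nat.card V) := by
    unfold flowPoly
    rw [Polynomial.eval_finsetSum]
    simp only [Polynomial.eval_mul, Polynomial.eval_pow, Polynomial.eval_neg, Polynomial.eval_one,
      Polynomial.eval_X]
    congr!
  rw [hev]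
  simp only [hT, Finset.mul_sum]
  rw [Finset.sum_comm]
  simp only [hφ]
  rw [Finset.sum_boole, Nat.card_eq_fintype_card, Fintype.card_subtype, Finset.filter_filter]

/-- Number of nowhere-zero flows with prescribed values on the edges `j`. -/
noncomputable def cnt {V E ι : Type} [Fintype E] {Γ : Type} [AddCommGroup Γ] [Module (ZMod 2) Γ]
    (G : Multigraph V E) (j : ι → E) (x : ι → Γ) : ℕ :=
  Nat.card {φ : E → Γ // (IsFl G φ ∧ ∀ e, φ e ≠ 0) ∧ ∀ i, φ (j i) = x i}

theorem sum_cnt {V E ι : Type} [Fintype E] [Fintype ι] {Γ : Type} [AddCommGroup Γ]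
    [Module (ZMod 2) Γ] [Fintype Γ] [Fintype (ι → Γ)] (G : Multigraph V E) (j : ι → E) :
    Nat.card {φ : E → Γ // IsFl G φ ∧ ∀ e, φ e ≠ 0} = ∑ x : ι → Γ, cnt G j x := by
  classical
  simp only [cnt, Nat.card_eq_fintype_card, Fintype.card_subtype]
  rw [Finset.card_eq_sum_card_fiberwise (f := fun φ i => φ (j i)) (t := Finset.univ)
    (fun _ _ => Finset.mem_coe.mpr (Finset.mem_univ _))]
  refine Finset.sum_congr rfl fun x _ => ?_
  rw [Finset.filter_filter]
  simp only [funext_iff]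

theorem isFl_equiv {V E : Type} [Fintype E] {Γ : Type} [AddCommGroup Γ] [Module (ZMod 2) Γ]
    (G : Multigraph V E) (σ : Γ ≃ₗ[ZMod 2] Γ) (φ : E → Γ) :
    IsFl G (fun e => σ (φ e)) ↔ IsFl G φ := by
  unfold IsFl
  refine forall_congr' fun g => ?_
  simp only [← map_smul, ← map_sum]
  exact map_eq_zero_iff σ σ.injective

theorem cnt_equiv {V E ι : Type} [Fintype E] {Γ : Type} [AddCommGroup Γ] [Module (ZMod 2) Γ]
    (G : Multigraph V E) (j : ι → E) (σ : Γ ≃ₗ[ZMod 2] Γ) (x y : ι → Γ)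
    (h : ∀ i, σ (x i) = y i) : cnt G j x = cnt G j y := by
  unfold cnt
  refine Nat.card_congr (Equiv.subtypeEquiv (Equiv.arrowCongr (Equiv.refl E) σ.toEquiv) ?_)
  intro φ
  have : (Equiv.arrowCongr (Equiv.refl E) σ.toEquiv) φ = fun e => σ (φ e) := rfl
  rw [this, isFl_equiv]
  simp [← h]

theorem cnt_zero {V E ι : Type} [Fintype E] [Fintype ι] {Γ : Type} [AddCommGroup Γ]
    [Module (ZMod 2) Γ]
    (G : Multigraph V E) (j : ι → E) (hj : ∀ φ : E → Γ, IsFl G φ → ∑ i, φ (j i) = 0)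
    (x : ι → Γ) (hx : ¬ ((∀ i, x i ≠ 0) ∧ ∑ i, x i = 0)) : cnt G j x = 0 := by
  unfold cnt
  rw [Nat.card_eq_zero]
  left
  constructor
  rintro ⟨φ, ⟨h1, h2⟩, h3⟩
  apply hx
  constructor
  · intro i
    rw [← h3]
    exact h2 _
  · rw [← hj φ h1]
    exact Finset.sum_congr rfl fun i _ => (h3 i).symm

theorem contract_sum_zero {V E ι : Type} [Fintype E] [Fintype ι] {Γ : Type} [AddCommGroup Γ]
    [Module (ZMod 2) Γ] (G : Multigraph V E) (V₁ V₂ : Set V) (hV : ∀ v, v ∈ V₂ ↔ v ∉ V₁)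
    [Fintype {e // e ∉ {e | G.fst e ∈ V₂ ∧ G.snd e ∈ V₂}}]
    (j : ι → {e // e ∉ {e | G.fst e ∈ V₂ ∧ G.snd e ∈ V₂}}) (hj : Function.Injective j)
    (hr : ∀ e, e ∈ Set.range j ↔ ((G.fst e.1 ∈ V₁ ∧ G.snd e.1 ∈ V₂) ∨
      (G.fst e.1 ∈ V₂ ∧ G.snd e.1 ∈ V₁)))
    (φ : {e // e ∉ {e | G.fst e ∈ V₂ ∧ G.snd e ∈ V₂}} → Γ)
    (hφ : IsFl (G.contract {e | G.fst e ∈ V₂ ∧ G.snd e ∈ V₂}) φ) :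
    ∑ i, φ (j i) = 0 := by
  classical
  rw [isFl_contract_iff] at hφ
  rw [← hφ (fun v => if v ∈ V₁ then 1 else 0) (by
    rintro e ⟨h1, h2⟩
    rw [hV] at h1 h2
    simp [h1, h2])]
  refine Fintype.sum_of_injective j hj _ _ ?_ ?_
  · intro e he
    rw [hr, hV, hV] at he
    have h2 := e.2
    simp only [Set.mem_ofPred_eq, hV] at h2
    have h1 : G.fst e.1 ∈ V₁ := by tauto
    have h3 : G.snd e.1 ∈ V₁ := by tauto
    simp only [h1, h3, if_true]
    rw [ZModModule.add_self, zero_smul]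
  · intro i
    have := (hr (j i)).1 ⟨i, rfl⟩
    rw [hV, hV] at this
    rcases this with h | h <;> simp [h.1, h.2]

theorem cnt_mul {V E ι : Type} [Fintype E] {Γ : Type} [AddCommGroup Γ]
    [Module (ZMod 2) Γ] (G : Multigraph V E) (V₁ V₂ : Set V) (hV : ∀ v, v ∈ V₂ ↔ v ∉ V₁)
    [Fintype {e // e ∉ {e | G.fst e ∈ V₂ ∧ G.snd e ∈ V₂}}]
    [Fintype {e // e ∉ {e | G.fst e ∈ V₁ ∧ G.snd e ∈ V₁}}]
    (j : ι → E)
    (j₁ : ι → {e // e ∉ {e | G.fst e ∈ V₂ ∧ G.snd e ∈ V₂}})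
    (j₂ : ι → {e // e ∉ {e | G.fst e ∈ V₁ ∧ G.snd e ∈ V₁}})
    (h₁ : ∀ i, (j₁ i).1 = j i) (h₂ : ∀ i, (j₂ i).1 = j i)
    (hr : ∀ e, e ∈ Set.range j ↔ ((G.fst e ∈ V₁ ∧ G.snd e ∈ V₂) ∨
      (G.fst e ∈ V₂ ∧ G.snd e ∈ V₁))) (x : ι → Γ) :
    cnt G j x = cnt (G.contract {e | G.fst e ∈ V₂ ∧ G.snd e ∈ V₂}) j₁ x *
      cnt (G.contract {e | G.fst e ∈ V₁ ∧ G.snd e ∈ V₁}) j₂ x := by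
  classical
  have hex : ∀ e, ¬ (e ∉ {e | G.fst e ∈ V₂ ∧ G.snd e ∈ V₂}) →
      e ∉ {e | G.fst e ∈ V₁ ∧ G.snd e ∈ V₁} := by
    intro e he
    simp only [Set.mem_ofPred_eq, hV] at *
    tauto
  have hrestr : ∀ (F : Set E) [Fintype {e // e ∉ F}] (φ : E → Γ) (g : V → ZMod 2),
      (∀ e ∈ F, g (G.fst e) = g (G.snd e)) →
      ∑ e : {e // e ∉ F}, (g (G.fst e.1) + g (G.snd e.1)) • φ e.1 =
        ∑ e, (g (G.fst e) + g (G.snd e)) • φ e := by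
    intro F _ φ g hg
    refine sum_subtype_of_zero (fun e => e ∉ F) (fun e => (g (G.fst e) + g (G.snd e)) • φ e) ?_
    intro e he
    rw [hg e (not_not.1 he), ZModModule.add_self, zero_smul]
  unfold cnt
  rw [← Nat.card_prod]
  let glue : ({e // e ∉ {e | G.fst e ∈ V₂ ∧ G.snd e ∈ V₂}} → Γ) →
      ({e // e ∉ {e | G.fst e ∈ V₁ ∧ G.snd e ∈ V₁}} → Γ) → E → Γ := fun φ₁ φ₂ e =>
    if h : e ∉ {e | G.fst e ∈ V₂ ∧ G.snd e ∈ V₂} then φ₁ ⟨e, h⟩ else φ₂ ⟨e, hex e h⟩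
  have glue1 : ∀ φ₁ φ₂ e, glue φ₁ φ₂ e.1 = φ₁ e := by
    intro φ₁ φ₂ e
    exact dif_pos e.2
  have glue2 : ∀ φ₁ φ₂, (∀ i, φ₁ (j₁ i) = x i) → (∀ i, φ₂ (j₂ i) = x i) →
      ∀ e, glue φ₁ φ₂ e.1 = φ₂ e := by
    intro φ₁ φ₂ hx1 hx2 e
    by_cases h : e.1 ∉ {e | G.fst e ∈ V₂ ∧ G.snd e ∈ V₂}
    · have : e.1 ∈ Set.range j := by
        rw [hr]
        have := e.2
        simp only [Set.mem_ofPred_eq, hV] at *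
        tauto
      obtain ⟨i, hi⟩ := this
      have e1 : j₁ i = ⟨e.1, h⟩ := Subtype.ext ((h₁ i).trans hi)
      have e2 : j₂ i = e := Subtype.ext ((h₂ i).trans hi)
      have : glue φ₁ φ₂ e.1 = φ₁ ⟨e.1, h⟩ := dif_pos h
      rw [this, ← e1, hx1, ← hx2, e2]
    · exact dif_neg h
  refine Nat.card_congr
    { toFun := fun φ => ⟨⟨fun e => φ.1 e.1, ⟨?_, fun e => φ.2.1.2 e.1⟩, fun i => ?_⟩,
        ⟨fun e => φ.1 e.1, ⟨?_, fun e => φ.2.1.2 e.1⟩, fun i => ?_⟩⟩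
      invFun := fun ψ => ⟨glue ψ.1.1 ψ.2.1, ⟨?_, ?_⟩, ?_⟩
      left_inv := ?_
      right_inv := ?_ }
  · rw [isFl_contract_iff]
    intro g hg
    rw [hrestr _ φ.1 g hg]
    exact φ.2.1.1 g
  · exact (congrArg φ.1 (h₁ i)).trans (φ.2.2 i)
  · rw [isFl_contract_iff]
    intro g hg
    rw [hrestr _ φ.1 g hg]
    exact φ.2.1.1 g
  · exact (congrArg φ.1 (h₂ i)).trans (φ.2.2 i)
  · obtain ⟨⟨φ₁, ⟨hf1, hn1⟩, hx1⟩, ⟨φ₂, ⟨hf2, hn2⟩, hx2⟩⟩ := ψ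
    intro g
    simp only
    rw [isFl_contract_iff] at hf1 hf2
    let g₁ : V → ZMod 2 := fun v => if v ∈ V₁ then g v else 0
    let g₂ : V → ZMod 2 := fun v => if v ∈ V₁ then 0 else g v
    have hg : ∀ v, g v = g₁ v + g₂ v := by
      intro v
      by_cases hv : v ∈ V₁ <;> simp [g₁, g₂, hv]
    have hg1 : ∀ e ∈ {e | G.fst e ∈ V₂ ∧ G.snd e ∈ V₂}, g₁ (G.fst e) = g₁ (G.snd e) := by
      rintro e ⟨h1, h2⟩
      rw [hV] at h1 h2
      simp [g₁, h1, h2]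
    have hg2 : ∀ e ∈ {e | G.fst e ∈ V₁ ∧ G.snd e ∈ V₁}, g₂ (G.fst e) = g₂ (G.snd e) := by
      rintro e ⟨h1, h2⟩
      simp [g₂, h1, h2]
    have hs1 := hf1 g₁ hg1
    have hs2 := hf2 g₂ hg2
    simp only [← glue1 φ₁ φ₂] at hs1
    simp only [← glue2 φ₁ φ₂ hx1 hx2] at hs2
    rw [hrestr _ _ g₁ hg1] at hs1
    rw [hrestr _ _ g₂ hg2] at hs2
    have hs := congrArg₂ (· + ·) hs1 hs2
    simp only [← Finset.sum_add_distrib, add_zero] at hs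
    rw [← hs]
    refine Finset.sum_congr rfl fun e _ => ?_
    rw [hg, hg, ← add_smul]
    congr 1
    ring
  · obtain ⟨⟨φ₁, ⟨hf1, hn1⟩, hx1⟩, ⟨φ₂, ⟨hf2, hn2⟩, hx2⟩⟩ := ψ
    intro e
    simp only [glue]
    split_ifs with h
    · exact hn2 _
    · exact hn1 _
  · intro i
    rw [← h₁, glue1]
    exact ψ.1.2.2 i
  · rintro ⟨φ, hφ⟩
    ext e : 2
    simp only [glue]
    split_ifs <;> rfl
  · rintro ⟨⟨φ₁, ⟨hf1, hn1⟩, hx1⟩, ⟨φ₂, ⟨hf2, hn2⟩, hx2⟩⟩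
    refine Prod.ext (Subtype.ext (funext fun e => ?_)) (Subtype.ext (funext fun e => ?_))
    · exact glue1 φ₁ φ₂ e
    · exact glue2 φ₁ φ₂ hx1 hx2 e

theorem sum_mul_const {α : Type} [Fintype α] (P : α → Prop) [DecidablePred P] (A B : α → ℕ)
    (hA0 : ∀ x, ¬ P x → A x = 0) (hB0 : ∀ x, ¬ P x → B x = 0)
    (hA : ∀ x y, P x → P y → A x = A y) (hB : ∀ x y, P x → P y → B x = B y) :
    (Finset.univ.filter P).card * ∑ x, A x * B x = (∑ x, A x) * ∑ x, B x := by
  have hf : ∀ f : α → ℕ, (∀ x, ¬ P x → f x = 0) → ∑ x, f x = ∑ x ∈ Finset.univ.filter P, f x := by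
    intro f h
    rw [Finset.sum_filter]
    refine Finset.sum_congr rfl fun x _ => ?_
    split_ifs with hx
    · rfl
    · exact h x hx
  rw [hf A hA0, hf B hB0, hf (fun x => A x * B x) (fun x hx => by simp [hA0 x hx])]
  by_cases hex : ∃ z, P z
  · obtain ⟨z, hz⟩ := hex
    have h1 : ∀ x ∈ Finset.univ.filter P, A x = A z := fun x hx => hA _ _ (by simpa using hx) hz
    have h2 : ∀ x ∈ Finset.univ.filter P, B x = B z := fun x hx => hB _ _ (by simpa using hx) hz
    rw [Finset.sum_congr rfl h1, Finset.sum_congr rfl h2,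
      Finset.sum_congr rfl (fun x hx => by rw [h1 x hx, h2 x hx])]
    simp only [Finset.sum_const, smul_eq_mul]
    ring
  · push Not at hex
    simp [Finset.filter_false_of_mem (fun x _ => hex x)]

end FlowAux
end Multigraph

open Multigraph Polynomial in
/-- Jackson. If `S = (V₁,V₂)` is an edge-cut of a 2-edge-connected
finite multigraph `G` with `2 ≤ |S| ≤ 3` and `Gᵢ` is obtained from `G` by contracting
all edges induced by `V_{3−i}`, then
`(q−1)(q−2)⋯(q−|S|+1)·F(G,q) = F(G₁,q)·F(G₂,q)`. -/
theorem flowPoly_edge_cut_decomposition {V E : Type} [Fintype V] [Fintype E]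
    (G : Multigraph V E) (hconn : G.Connected) (hbl : G.Bridgeless)
    (V₁ V₂ : Set V) (hne₁ : V₁.Nonempty) (hne₂ : V₂.Nonempty)
    (hdisj : V₁ ∩ V₂ = ∅) (hcover : V₁ ∪ V₂ = Set.univ)
    (S : Set E)
    (hS : S = {e | (G.fst e ∈ V₁ ∧ G.snd e ∈ V₂) ∨ (G.fst e ∈ V₂ ∧ G.snd e ∈ V₁)})
    (hcard₂ : 2 ≤ S.ncard) (hcard₃ : S.ncard ≤ 3) :
    (∏ i ∈ Finset.Icc 1 (S.ncard - 1), (X - C (i : ℝ))) * G.flowPoly =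
      (G.contract {e | G.fst e ∈ V₂ ∧ G.snd e ∈ V₂}).flowPoly *
        (G.contract {e | G.fst e ∈ V₁ ∧ G.snd e ∈ V₁}).flowPoly := by
  classical
  have hV : ∀ v, v ∈ V₂ ↔ v ∉ V₁ := by
    intro v
    have h1 : v ∉ V₁ ∩ V₂ := by rw [hdisj]; exact id
    have h2 : v ∈ V₁ ∪ V₂ := by rw [hcover]; trivial
    simp only [Set.mem_inter_iff, Set.mem_union] at h1 h2
    tauto
  have hV' : ∀ v, v ∈ V₁ ↔ v ∉ V₂ := by
    intro v
    rw [hV, not_not]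
  apply Polynomial.eq_of_infinite_eval_eq
  have hinj : Function.Injective (fun n : ℕ => (2 : ℝ) ^ n) :=
    pow_right_injective₀ (by norm_num) (by norm_num)
  refine (Set.infinite_range_of_injective hinj).mono ?_
  rintro _ ⟨n, rfl⟩
  change Polynomial.eval _ (_ * _) = Polynomial.eval _ (_ * _)
  rw [Polynomial.eval_mul, Polynomial.eval_mul, FlowAux.eval_flowPoly, FlowAux.eval_flowPoly,
    FlowAux.eval_flowPoly]
  obtain ⟨k, hk⟩ : ∃ k, S.ncard = k := ⟨_, rfl⟩
  have ε : Fin k ≃ S := by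
    refine (finCongr ?_).trans (Finite.equivFin S).symm
    rw [← hk]
    exact (Nat.card_coe_set_eq S).symm
  let j : Fin k → E := fun i => (ε i).1
  have hmem : ∀ i, (G.fst (j i) ∈ V₁ ∧ G.snd (j i) ∈ V₂) ∨
      (G.fst (j i) ∈ V₂ ∧ G.snd (j i) ∈ V₁) := by
    intro i
    have := (ε i).2
    exact hS.subset this
  have hr : ∀ e, e ∈ Set.range j ↔ ((G.fst e ∈ V₁ ∧ G.snd e ∈ V₂) ∨
      (G.fst e ∈ V₂ ∧ G.snd e ∈ V₁)) := by
    intro e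
    constructor
    · rintro ⟨i, rfl⟩
      exact hmem i
    · intro h
      have h : e ∈ S := by rw [hS]; exact h
      exact ⟨ε.symm ⟨e, h⟩, by simp [j]⟩
  have hji : Function.Injective j := Subtype.val_injective.comp ε.injective
  let j₁ : Fin k → {e // e ∉ {e | G.fst e ∈ V₂ ∧ G.snd e ∈ V₂}} := fun i => ⟨j i, by
    have := hmem i
    simp only [Set.mem_ofPred_eq, hV] at *
    tauto⟩
  let j₂ : Fin k → {e // e ∉ {e | G.fst e ∈ V₁ ∧ G.snd e ∈ V₁}} := fun i => ⟨j i, by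
    have := hmem i
    simp only [Set.mem_ofPred_eq, hV] at *
    tauto⟩
  have hj₁ : Function.Injective j₁ := fun a b h => by
    have h2 := Subtype.ext_iff.1 h
    exact hji h2
  have hj₂ : Function.Injective j₂ := fun a b h => by
    have h2 := Subtype.ext_iff.1 h
    exact hji h2
  have hz₁ := FlowAux.contract_sum_zero (Γ := Fin n → ZMod 2) G V₁ V₂ hV j₁ hj₁ (by
    intro e
    rw [← hr]
    exact ⟨fun ⟨i, hi⟩ => ⟨i, congrArg Subtype.val hi⟩, fun ⟨i, hi⟩ => ⟨i, Subtype.ext hi⟩⟩)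
  have hz₂ := FlowAux.contract_sum_zero (Γ := Fin n → ZMod 2) G V₂ V₁ hV' j₂ hj₂ (by
    intro e
    rw [or_comm, ← hr]
    exact ⟨fun ⟨i, hi⟩ => ⟨i, congrArg Subtype.val hi⟩, fun ⟨i, hi⟩ => ⟨i, Subtype.ext hi⟩⟩)
  have htr : ∀ x y : Fin k → (Fin n → ZMod 2), ((∀ i, x i ≠ 0) ∧ ∑ i, x i = 0) →
      ((∀ i, y i ≠ 0) ∧ ∑ i, y i = 0) →
      ∃ σ : (Fin n → ZMod 2) ≃ₗ[ZMod 2] (Fin n → ZMod 2), ∀ i, σ (x i) = y i := by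
    obtain rfl | rfl : k = 2 ∨ k = 3 := by omega
    · exact fun x y hx hy => FlowAux.trans_two x y hx.1 hx.2 hy.1 hy.2
    · exact fun x y hx hy => FlowAux.trans_three x y hx.1 hx.2 hy.1 hy.2
  have hX : Polynomial.eval ((2 : ℝ) ^ n) (∏ i ∈ Finset.Icc 1 (S.ncard - 1), (X - C (i : ℝ)))
      = ((Finset.univ.filter (fun x : Fin k → (Fin n → ZMod 2) =>
          (∀ i, x i ≠ 0) ∧ ∑ i, x i = 0)).card : ℝ) := by
    rw [hk]
    have hc : (Fintype.card (Fin n → ZMod 2) : ℝ) = 2 ^ n := by simp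
    obtain rfl | rfl : k = 2 ∨ k = 3 := by omega
    · rw [FlowAux.card_two, hc]
      simp
    · rw [FlowAux.card_three, hc]
      have : Finset.Icc 1 (3 - 1) = {1, 2} := by decide
      rw [this]
      simp
  rw [hX, FlowAux.sum_cnt G j, FlowAux.sum_cnt _ j₁, FlowAux.sum_cnt _ j₂]
  have hmul := FlowAux.cnt_mul (Γ := Fin n → ZMod 2) G V₁ V₂ hV j j₁ j₂ (fun _ => rfl)
    (fun _ => rfl) hr
  simp only [hmul]
  have := FlowAux.sum_mul_const (fun x : Fin k → (Fin n → ZMod 2) =>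
          (∀ i, x i ≠ 0) ∧ ∑ i, x i = 0) _ _
    (FlowAux.cnt_zero _ j₁ hz₁) (FlowAux.cnt_zero _ j₂ hz₂)
    (fun x y hx hy => by
      obtain ⟨σ, hσ⟩ := htr x y hx hy
      exact FlowAux.cnt_equiv _ j₁ σ x y hσ)
    (fun x y hx hy => by
      obtain ⟨σ, hσ⟩ := htr x y hx hy
      exact FlowAux.cnt_equiv _ j₂ σ x y hσ)
  exact_mod_cast this
end

section
/- For every pair of real numbers a, b with 32/27 ≤ a < b, there exists a finite graph G and a real number q with a < q < b such that P(G,q) = 0. -/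
open Polynomial

/-- Number of proper colourings of a two-terminal graph with prescribed terminal colours. -/
noncomputable def Cnt {I : Type} (G : SimpleGraph (I ⊕ Bool)) (k : ℕ) (i j : Fin k) : ℕ :=
  Nat.card {f : I → Fin k // ∀ x y, G.Adj x y →
    Sum.elim f (fun b : Bool => cond b i j) x ≠ Sum.elim f (fun b : Bool => cond b i j) y}

/-- The pair of polynomials `(a, b)` is realised by a two-terminal graph. -/
def Rz (a b : ℝ[X]) : Prop :=
  ∃ (I : Type) (_ : Finite I) (G : SimpleGraph (I ⊕ Bool)), ∀ (k : ℕ) (i j : Fin k),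
    (Cnt G k i j : ℝ) = if i = j then a.eval (k : ℝ) else b.eval (k : ℝ)

lemma adj_map_sup {V W X C : Type} (G : SimpleGraph V) (H : SimpleGraph W) (e : V ↪ X) (g : W ↪ X)
    (c : X → C) :
    (∀ x y, (G.map e ⊔ H.map g).Adj x y → c x ≠ c y) ↔
      (∀ x y, G.Adj x y → c (e x) ≠ c (e y)) ∧ (∀ x y, H.Adj x y → c (g x) ≠ c (g y)) := by
  constructor
  · intro h
    refine ⟨fun x y hxy => h _ _ (Or.inl ?_), fun x y hxy => h _ _ (Or.inr ?_)⟩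
    · exact (SimpleGraph.map_adj _ _ _ _).2 ⟨x, y, hxy, rfl, rfl⟩
    · exact (SimpleGraph.map_adj _ _ _ _).2 ⟨x, y, hxy, rfl, rfl⟩
  · rintro ⟨h1, h2⟩ x y (h | h)
    · obtain ⟨u, v, huv, rfl, rfl⟩ := (SimpleGraph.map_adj _ _ _ _).1 h
      exact h1 u v huv
    · obtain ⟨u, v, huv, rfl, rfl⟩ := (SimpleGraph.map_adj _ _ _ _).1 h
      exact h2 u v huv

lemma Rz.par {a b c d : ℝ[X]} (h1 : Rz a b) (h2 : Rz c d) : Rz (a * c) (b * d) := by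
  obtain ⟨I, _, G, hG⟩ := h1
  obtain ⟨J, _, H, hH⟩ := h2
  let e : I ⊕ Bool ↪ (I ⊕ J) ⊕ Bool :=
    ⟨Sum.map Sum.inl id, Sum.map_injective.2 ⟨Sum.inl_injective, fun _ _ h => h⟩⟩
  let g : J ⊕ Bool ↪ (I ⊕ J) ⊕ Bool :=
    ⟨Sum.map Sum.inr id, Sum.map_injective.2 ⟨Sum.inr_injective, fun _ _ h => h⟩⟩
  refine ⟨I ⊕ J, inferInstance, G.map e ⊔ H.map g, fun k i j => ?_⟩
  have key : Cnt (G.map e ⊔ H.map g) k i j = Cnt G k i j * Cnt H k i j := by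
    unfold Cnt
    rw [← Nat.card_prod]
    refine Nat.card_congr (Equiv.trans (Equiv.subtypeEquiv (Equiv.sumArrowEquivProdArrow I J (Fin k))
      (q := fun p => (∀ x y, G.Adj x y → Sum.elim p.1 (fun b : Bool => cond b i j) x ≠
          Sum.elim p.1 (fun b : Bool => cond b i j) y) ∧
        (∀ x y, H.Adj x y → Sum.elim p.2 (fun b : Bool => cond b i j) x ≠
          Sum.elim p.2 (fun b : Bool => cond b i j) y)) ?_)
      (Equiv.subtypeProdEquivProd
        (p := fun f => ∀ x y, G.Adj x y → Sum.elim f (fun b : Bool => cond b i j) x ≠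
          Sum.elim f (fun b : Bool => cond b i j) y)
        (q := fun f => ∀ x y, H.Adj x y → Sum.elim f (fun b : Bool => cond b i j) x ≠
          Sum.elim f (fun b : Bool => cond b i j) y)))
    intro f
    rw [adj_map_sup]
    have e1 : ∀ x, Sum.elim f (fun b : Bool => cond b i j) (e x) =
        Sum.elim (f ∘ Sum.inl) (fun b : Bool => cond b i j) x := by
      rintro (x | x) <;> rfl
    have e2 : ∀ x, Sum.elim f (fun b : Bool => cond b i j) (g x) =
        Sum.elim (f ∘ Sum.inr) (fun b : Bool => cond b i j) x := by
      rintro (x | x) <;> rfl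
    simp only [e1, e2]
    rfl
  rw [key, Nat.cast_mul, hG, hH]
  split_ifs <;> simp

lemma Rz.ser {a b c d : ℝ[X]} (h1 : Rz a b) (h2 : Rz c d) :
    Rz (a * c + (X - 1) * (b * d)) (a * d + b * c + (X - 2) * (b * d)) := by
  obtain ⟨I, _, G, hG⟩ := h1
  obtain ⟨J, _, H, hH⟩ := h2
  -- the graph on the left joins `true` to the middle vertex, the right one the middle to `false`
  let e : I ⊕ Bool ↪ ((I ⊕ J) ⊕ Unit) ⊕ Bool :=
    ⟨Sum.elim (fun x => Sum.inl (Sum.inl (Sum.inl x)))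
      (fun b => cond b (Sum.inr true) (Sum.inl (Sum.inr ()))), by
        rintro (x | _ | _) (y | _ | _) h <;> simp_all⟩
  let g : J ⊕ Bool ↪ ((I ⊕ J) ⊕ Unit) ⊕ Bool :=
    ⟨Sum.elim (fun x => Sum.inl (Sum.inl (Sum.inr x)))
      (fun b => cond b (Sum.inl (Sum.inr ())) (Sum.inr false)), by
        rintro (x | _ | _) (y | _ | _) h <;> simp_all⟩
  refine ⟨(I ⊕ J) ⊕ Unit, inferInstance, G.map e ⊔ H.map g, fun k i j => ?_⟩
  have key : Cnt (G.map e ⊔ H.map g) k i j = ∑ m : Fin k, Cnt G k i m * Cnt H k m j := by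
    unfold Cnt
    simp only [← Nat.card_prod]
    rw [← Nat.card_sigma]
    let F : (m : Fin k) → (I → Fin k) × (J → Fin k) → Prop := fun m p =>
      (∀ x y, G.Adj x y → Sum.elim p.1 (fun b : Bool => cond b i m) x ≠
          Sum.elim p.1 (fun b : Bool => cond b i m) y) ∧
        (∀ x y, H.Adj x y → Sum.elim p.2 (fun b : Bool => cond b m j) x ≠
          Sum.elim p.2 (fun b : Bool => cond b m j) y)
    refine Nat.card_congr (Equiv.trans ?_
      (Equiv.sigmaCongrRight (fun m => Equiv.subtypeProdEquivProd)))
    have hF : ∀ f : (I ⊕ J) ⊕ Unit → Fin k, (∀ x y, (G.map e ⊔ H.map g).Adj x y →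
        Sum.elim f (fun b : Bool => cond b i j) x ≠ Sum.elim f (fun b : Bool => cond b i j) y) ↔
        F (f (Sum.inr ())) (fun x => f (Sum.inl (Sum.inl x)), fun x => f (Sum.inl (Sum.inr x))) := by
      intro f
      rw [adj_map_sup]
      have e1 : ∀ x, Sum.elim f (fun b : Bool => cond b i j) (e x) =
          Sum.elim (fun x => f (Sum.inl (Sum.inl x)))
            (fun b : Bool => cond b i (f (Sum.inr ()))) x := by
        rintro (x | _ | _) <;> rfl
      have e2 : ∀ x, Sum.elim f (fun b : Bool => cond b i j) (g x) =
          Sum.elim (fun x => f (Sum.inl (Sum.inr x)))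
            (fun b : Bool => cond b (f (Sum.inr ())) j) x := by
        rintro (x | _ | _) <;> rfl
      simp only [e1, e2]
      rfl
    exact
      { toFun := fun f => ⟨f.1 (Sum.inr ()), ⟨_, (hF f.1).1 f.2⟩⟩
        invFun := fun p => ⟨Sum.elim (Sum.elim p.2.1.1 p.2.1.2) (fun _ => p.1), (hF _).2 p.2.2⟩
        left_inv := by
          rintro ⟨f, hf⟩
          apply Subtype.ext
          funext x
          rcases x with (x | x) | x <;> rfl
        right_inv := by
          rintro ⟨m, ⟨p, q⟩, hp⟩
          rfl }
  rw [key, Nat.cast_sum]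
  simp only [Nat.cast_mul, hG, hH]
  have hk1 : ∀ i : Fin k, ((Finset.univ.erase i).card : ℝ) = k - 1 := by
    intro i
    rw [Finset.card_erase_of_mem (Finset.mem_univ i), Nat.cast_sub]
    · simp
    · simpa using Nat.succ_le_of_lt i.pos
  split_ifs with hij
  · subst hij
    rw [← Finset.add_sum_erase _ _ (Finset.mem_univ i)]
    have : ∀ m ∈ Finset.univ.erase i, ((if i = m then eval (k : ℝ) a else eval (k : ℝ) b) *
        (if m = i then eval (k : ℝ) c else eval (k : ℝ) d)) = eval (k : ℝ) b * eval (k : ℝ) d := by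
      intro m hm
      have := Finset.ne_of_mem_erase hm
      rw [if_neg this, if_neg this.symm]
    rw [Finset.sum_congr rfl this, Finset.sum_const, nsmul_eq_mul, hk1]
    simp
  · have hj : j ∈ Finset.univ.erase i := Finset.mem_erase.2 ⟨Ne.symm hij, Finset.mem_univ _⟩
    rw [← Finset.add_sum_erase _ _ (Finset.mem_univ i), ← Finset.add_sum_erase _ _ hj]
    have : ∀ m ∈ (Finset.univ.erase i).erase j, ((if i = m then eval (k : ℝ) a else eval (k : ℝ) b) *
        (if m = j then eval (k : ℝ) c else eval (k : ℝ) d)) = eval (k : ℝ) b * eval (k : ℝ) d := by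
      intro m hm
      have h1 := Finset.ne_of_mem_erase hm
      have h2 := Finset.ne_of_mem_erase (Finset.mem_of_mem_erase hm)
      rw [if_neg h1, if_neg h2.symm]
    rw [Finset.sum_congr rfl this, Finset.sum_const, nsmul_eq_mul, Finset.card_erase_of_mem hj,
      Nat.cast_sub (Finset.card_pos.2 ⟨j, hj⟩), hk1]
    simp [hij]
    ring

lemma Rz.pow {a b : ℝ[X]} (h : Rz a b) (n : ℕ) : Rz (a ^ (n + 1)) (b ^ (n + 1)) := by
  induction n with
  | zero => simpa using h
  | succ n ih => rw [pow_succ a, pow_succ b]; exact ih.par h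

lemma Rz.K0 (n : ℕ) :
    Rz ((descPochhammer ℝ n).comp (X - 1)) ((descPochhammer ℝ n).comp (X - 2)) := by
  refine ⟨Fin n, inferInstance, SimpleGraph.fromRel (fun x _ => x.isLeft = true), fun k i j => ?_⟩
  have key : Cnt (SimpleGraph.fromRel (fun (x _ : Fin n ⊕ Bool) => x.isLeft = true)) k i j =
      (Fintype.card {c : Fin k // c ≠ i ∧ c ≠ j}).descFactorial n := by
    have := Fintype.card_embedding_eq (α := Fin n) (β := {c : Fin k // c ≠ i ∧ c ≠ j})
    rw [Fintype.card_fin] at this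
    rw [← this, ← Nat.card_eq_fintype_card]
    unfold Cnt
    refine Nat.card_congr
      { toFun := fun f => ⟨fun x => ⟨f.1 x, ?_, ?_⟩, ?_⟩
        invFun := fun g => ⟨fun x => (g x).1, ?_⟩
        left_inv := fun f => rfl
        right_inv := fun g => rfl }
    · exact f.2 (Sum.inl x) (Sum.inr true) (by simp)
    · exact f.2 (Sum.inl x) (Sum.inr false) (by simp)
    · intro x y hxy
      by_contra hne
      exact f.2 (Sum.inl x) (Sum.inl y) (by simpa using hne) (congrArg Subtype.val hxy)
    · rintro (x | x) (y | y) h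
      · intro h'
        have := g.injective (Subtype.ext h')
        simp_all
      · have := (g x).2
        cases y <;> simp_all
      · have := (g y).2
        cases x <;> simp [this.1.symm, this.2.symm]
      · simp at h
  rw [key, Fintype.card_subtype]
  have hset : (Finset.univ.filter (fun c : Fin k => c ≠ i ∧ c ≠ j)) =
      (Finset.univ.erase i).erase j := by
    ext c; simp [and_comm]
  have hpos : 1 ≤ k := i.pos
  rw [hset, ← descPochhammer_eval_eq_descFactorial]
  split_ifs with hij
  · subst hij
    rw [Finset.erase_idem, Finset.card_erase_of_mem (Finset.mem_univ i),
      Nat.cast_sub (by simpa using hpos)]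
    simp [eval_comp]
  · have hj : j ∈ Finset.univ.erase i := Finset.mem_erase.2 ⟨Ne.symm hij, Finset.mem_univ _⟩
    rw [Finset.card_erase_of_mem hj, Nat.cast_sub (Finset.card_pos.2 ⟨j, hj⟩),
      Finset.card_erase_of_mem (Finset.mem_univ i), Nat.cast_sub (by simpa using hpos)]
    simp [eval_comp]
    congr 1
    ring

lemma Rz.K (n : ℕ) : ∃ r : ℝ[X], Rz ((X - 1) * r) ((X - 1 - C ((n : ℝ) + 1)) * r) ∧
    ∀ q : ℝ, (∀ l : ℤ, q ≠ l) → r.eval q ≠ 0 := by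
  refine ⟨(descPochhammer ℝ n).comp (X - 2), ?_, ?_⟩
  · have h := Rz.K0 (n + 1)
    have e1 : (descPochhammer ℝ (n + 1)).comp (X - 1) =
        (X - 1) * (descPochhammer ℝ n).comp (X - 2) := by
      rw [descPochhammer_succ_left]
      rw [mul_comp, comp_assoc, X_comp]
      congr 2
      simp
      ring
    have e2 : (descPochhammer ℝ (n + 1)).comp (X - 2) =
        (X - 1 - C ((n : ℝ) + 1)) * (descPochhammer ℝ n).comp (X - 2) := by
      rw [descPochhammer_succ_right]
      simp
      ring
    rwa [e1, e2] at h
  · intro q hq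
    induction n with
    | zero => simp
    | succ n ih =>
      rw [descPochhammer_succ_right]
      simp only [mul_comp, eval_mul]
      refine mul_ne_zero ih ?_
      simp
      intro h
      apply hq (n + 2)
      push_cast
      linarith

lemma Rz.root {a b : ℝ[X]} (h : Rz a b) :
    ∃ (n : ℕ) (G : SimpleGraph (Fin n)),
      ∀ k : ℕ, 0 < k → ((X : ℝ[X]) * (a + (X - 1) * b)).eval (k : ℝ) =
          (Nat.card {f : Fin n → Fin k // ∀ u v, G.Adj u v → f u ≠ f v} : ℝ) := by
  obtain ⟨I, _, G, hG⟩ := h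
  have := Fintype.ofFinite I
  obtain ⟨n, ⟨e⟩⟩ := Finite.exists_equiv_fin (I ⊕ Bool)
  refine ⟨n, G.map e.toEmbedding, fun k hk => ?_⟩
  have key : Nat.card {f : Fin n → Fin k // ∀ u v, (G.map e.toEmbedding).Adj u v → f u ≠ f v} =
      ∑ p : Fin k × Fin k, Cnt G k p.1 p.2 := by
    unfold Cnt
    rw [← Nat.card_sigma]
    have hF : ∀ f : Fin n → Fin k, (∀ u v, (G.map e.toEmbedding).Adj u v → f u ≠ f v) ↔
        ∀ x y, G.Adj x y → f (e x) ≠ f (e y) := by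
      intro f
      have := adj_map_sup G G e.toEmbedding e.toEmbedding f
      simpa using this
    have hS : ∀ f : I ⊕ Bool → Fin k, f = Sum.elim (fun x => f (Sum.inl x))
        (fun b : Bool => cond b (f (Sum.inr true)) (f (Sum.inr false))) := by
      intro f
      funext x
      rcases x with x | _ | _ <;> rfl
    refine Nat.card_congr (Equiv.trans (Equiv.subtypeEquiv (Equiv.arrowCongr e.symm (Equiv.refl _))
      (q := fun f => ∀ x y, G.Adj x y → f x ≠ f y) (fun f => by rw [hF]; rfl))
      { toFun := fun f => ⟨(f.1 (Sum.inr true), f.1 (Sum.inr false)),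
          ⟨fun x => f.1 (Sum.inl x), ?_⟩⟩
        invFun := fun p => ⟨Sum.elim p.2.1 (fun b : Bool => cond b p.1.1 p.1.2), p.2.2⟩
        left_inv := ?_
        right_inv := ?_ })
    · have := f.2
      rw [hS f.1] at this
      exact this
    · rintro ⟨f, hf⟩
      apply Subtype.ext
      exact (hS f).symm
    · rintro ⟨⟨i, j⟩, f, hf⟩
      rfl
  rw [key, Nat.cast_sum, Fintype.sum_prod_type]
  simp only [hG]
  have hk1 : ∀ i : Fin k, ∑ j : Fin k, (if i = j then eval (k : ℝ) a else eval (k : ℝ) b) =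
      a.eval (k : ℝ) + (k - 1) * b.eval (k : ℝ) := by
    intro i
    rw [← Finset.add_sum_erase _ _ (Finset.mem_univ i)]
    have : ∀ m ∈ Finset.univ.erase i, (if i = m then eval (k : ℝ) a else eval (k : ℝ) b) =
        eval (k : ℝ) b := by
      intro m hm
      rw [if_neg (Finset.ne_of_mem_erase hm).symm]
    rw [Finset.sum_congr rfl this, Finset.sum_const, nsmul_eq_mul,
      Finset.card_erase_of_mem (Finset.mem_univ i), Nat.cast_sub (by simpa using Nat.succ_le_of_lt hk)]
    simp
  simp only [hk1]
  simp
  ring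

lemma ratio_anti (m : ℝ) :
    StrictAntiOn (fun u : ℝ => (Real.log (m - u) - Real.log u) / (Real.log (m + 1 - u) - Real.log u))
      (Set.Ioo 0 (m / 2)) := by
  have hder : ∀ u ∈ Set.Ioo 0 (m / 2), ∃ D, D < 0 ∧ HasDerivAt
      (fun u : ℝ => (Real.log (m - u) - Real.log u) / (Real.log (m + 1 - u) - Real.log u)) D u := by
    rintro u ⟨hu0, hu⟩
    have h1 : 0 < m - u := by linarith
    have h2 : 0 < m + 1 - u := by linarith
    have hf : HasDerivAt (fun u : ℝ => Real.log (m - u) - Real.log u) (-1 / (m - u) - 1 / u) u :=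
      (((hasDerivAt_id u).const_sub m).log h1.ne').sub ((hasDerivAt_id u).log hu0.ne')
    have hg : HasDerivAt (fun u : ℝ => Real.log (m + 1 - u) - Real.log u)
        (-1 / (m + 1 - u) - 1 / u) u :=
      (((hasDerivAt_id u).const_sub (m + 1)).log h2.ne').sub ((hasDerivAt_id u).log hu0.ne')
    have hF : 0 < Real.log (m - u) - Real.log u := by
      have := Real.log_lt_log hu0 (show u < m - u by linarith)
      linarith
    have hFG : Real.log (m - u) - Real.log u < Real.log (m + 1 - u) - Real.log u := by
      have := Real.log_lt_log h1 (show m - u < m + 1 - u by linarith)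
      linarith
    refine ⟨_, ?_, hf.div hg (by linarith)⟩
    generalize Real.log (m - u) - Real.log u = F at *
    generalize Real.log (m + 1 - u) - Real.log u = G at *
    apply div_neg_of_neg_of_pos _ (by nlinarith)
    have e : (-1 / (m - u) - 1 / u) * G - F * (-1 / (m + 1 - u) - 1 / u) =
        (F * ((m + 1) * (m - u)) - G * (m * (m + 1 - u))) / (u * (m - u) * (m + 1 - u)) := by
      field_simp
      ring
    rw [e]
    apply div_neg_of_neg_of_pos _ (by positivity)
    have hm : 0 < m := by linarith
    nlinarith [mul_pos hm h2, mul_pos hF hu0]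
  refine strictAntiOn_of_deriv_neg (convex_Ioo _ _) ?_ ?_
  · intro u hu
    obtain ⟨D, _, h⟩ := hder u hu
    exact h.continuousAt.continuousWithinAt
  · intro u hu
    rw [interior_Ioo] at hu
    obtain ⟨D, hD, h⟩ := hder u hu
    rw [h.deriv]
    exact hD

lemma choose_exp (x y c1 c2 : ℝ) (hx : 0 < x) (hxy : x < y) : ∃ N e : ℕ,
    ((2 * N + 1 : ℕ) : ℝ) * x - c1 < ((2 * e + 1 + 1 : ℕ) : ℝ) ∧
    ((2 * e + 1 + 1 : ℕ) : ℝ) < ((2 * N + 1 : ℕ) : ℝ) * y - c2 := by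
  obtain ⟨N, hN⟩ := exists_nat_gt (max ((2 + c2 - c1) / (y - x)) (c1 / x))
  have h1 := (le_max_left _ _).trans_lt hN
  have h2 := (le_max_right _ _).trans_lt hN
  rw [div_lt_iff₀ (by linarith)] at h1 h2
  have hN0 : (0 : ℝ) ≤ N := Nat.cast_nonneg _
  have h0 : 0 ≤ ((2 * N + 1) * x - c1) / 2 := by nlinarith
  have h3 := Nat.floor_le h0
  have h4 := Nat.lt_floor_add_one (((2 * N + 1) * x - c1) / 2)
  refine ⟨N, ⌊((2 * N + 1) * x - c1) / 2⌋₊, ?_, ?_⟩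
  · push_cast
    linarith
  · push_cast
    nlinarith

lemma ML0 {a b : ℝ[X]} (hR : Rz a b) {α β : ℝ} (hα : 1 ≤ α)
    (h : ∀ q ∈ Set.Ioo α β, b.eval q ≠ 0 ∧ 1 < -(a.eval q / b.eval q)) (M : ℕ)
    (hM : 2 * (β - 1) ≤ M + 1) {s l : ℝ} (hs : s ∈ Set.Ioo α β) (hl : l ∈ Set.Ioo α β)
    (hsl : Real.log (-(a.eval s / b.eval s)) /
        (Real.log (((M : ℝ) + 1) - (s - 1)) - Real.log (s - 1)) <
      Real.log (-(a.eval l / b.eval l)) /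
        (Real.log (((M : ℝ) + 1) - (l - 1)) - Real.log (l - 1))) :
    ∃ a' b' : ℝ[X], Rz a' b' ∧ ∃ q ∈ Set.Ioo α β, a'.eval q + (q - 1) * b'.eval q = 0 := by
  obtain ⟨r, hr, -⟩ := Rz.K M
  set m : ℝ := (M : ℝ) + 1 with hm
  have hu : ∀ q ∈ Set.Ioo α β, 0 < q - 1 ∧ q - 1 < m - (q - 1) := by
    rintro q ⟨h1, h2⟩
    constructor <;> linarith
  have hF : ∀ q ∈ Set.Ioo α β, 0 < Real.log (m - (q - 1)) - Real.log (q - 1) := by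
    intro q hq
    have := Real.log_lt_log (hu q hq).1 (hu q hq).2
    linarith
  have hL : ∀ q ∈ Set.Ioo α β, 0 < Real.log (-(a.eval q / b.eval q)) :=
    fun q hq => Real.log_pos (h q hq).2
  obtain ⟨N, e, hN1, hN2⟩ := choose_exp _ _
    (Real.log (s - 1) / (Real.log (m - (s - 1)) - Real.log (s - 1)))
    (Real.log (l - 1) / (Real.log (m - (l - 1)) - Real.log (l - 1)))
    (div_pos (hL s hs) (hF s hs)) hsl
  have hNo : Odd (2 * N + 1) := ⟨N, rfl⟩
  have heo : Even (2 * e + 1 + 1) := ⟨e + 1, by ring⟩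
  have hg := (hR.pow (2 * N)).par (hr.pow (2 * e + 1))
  generalize hEe : 2 * e + 1 + 1 = E at *
  generalize hNn : 2 * N + 1 = K at *
  refine ⟨_, _, hg, ?_⟩
  rw [mul_div_assoc', ← sub_div, div_lt_iff₀ (hF s hs)] at hN1
  rw [mul_div_assoc', ← sub_div, lt_div_iff₀ (hF l hl)] at hN2
  let ψ : ℝ → ℝ := fun q => (-(a.eval q / b.eval q)) ^ K * ((q - 1) / (m - (q - 1))) ^ E / (q - 1)
  have hlog : ∀ q ∈ Set.Ioo α β, 0 < ψ q ∧ Real.log (ψ q) = K * Real.log (-(a.eval q / b.eval q)) -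
      E * (Real.log (m - (q - 1)) - Real.log (q - 1)) - Real.log (q - 1) := by
    intro q hq
    have h1 := (h q hq).2
    have h2 := (hu q hq).1
    have h3 : 0 < m - (q - 1) := h2.trans (hu q hq).2
    have h4 : 0 < -(a.eval q / b.eval q) := by linarith
    refine ⟨by positivity, ?_⟩
    change Real.log (_ / _) = _
    rw [Real.log_div (by positivity) h2.ne', Real.log_mul (by positivity) (by positivity),
      Real.log_pow, Real.log_pow, Real.log_div h2.ne' h3.ne']
    ring
  have hψs : ψ s < 1 := by
    rw [← Real.log_neg_iff (hlog s hs).1, (hlog s hs).2]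
    linarith
  have hψl : 1 < ψ l := by
    rw [← Real.log_pos_iff (hlog l hl).1.le, (hlog l hl).2]
    linarith
  have hsub : Set.uIcc s l ⊆ Set.Ioo α β := Set.OrdConnected.uIcc_subset Set.ordConnected_Ioo hs hl
  have hcont : ContinuousOn ψ (Set.uIcc s l) := by
    intro q hq
    have hq' := hsub hq
    have h2 := (hu q hq').1
    have h3 : 0 < m - (q - 1) := h2.trans (hu q hq').2
    have h4 := (h q hq').1
    have ca : ContinuousAt (fun q => a.eval q) q := a.continuous.continuousAt
    have cb : ContinuousAt (fun q => b.eval q) q := b.continuous.continuousAt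
    have c1 : ContinuousAt (fun q : ℝ => q - 1) q := by fun_prop
    have c2 : ContinuousAt (fun q : ℝ => m - (q - 1)) q := by fun_prop
    exact ((((ca.div cb h4).neg.pow K).mul ((c1.div c2 h3.ne').pow E)).div c1
      h2.ne').continuousWithinAt
  obtain ⟨q, hq, hq1⟩ := intermediate_value_uIcc hcont
    (show (1 : ℝ) ∈ Set.uIcc (ψ s) (ψ l) from Set.mem_uIcc.2 (Or.inl ⟨hψs.le, hψl.le⟩))
  have hq' := hsub hq
  refine ⟨q, hq', ?_⟩
  have h2 := (hu q hq').1
  have h3 : 0 < m - (q - 1) := h2.trans (hu q hq').2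
  have h4 := (h q hq').1
  have hq2 : (-(a.eval q / b.eval q)) ^ K * ((q - 1) / (m - (q - 1))) ^ E = q - 1 := by
    have : _ / _ = (1 : ℝ) := hq1
    rwa [div_eq_one_iff_eq h2.ne'] at this
  have ea : a.eval q = -((-(a.eval q / b.eval q)) * b.eval q) := by field_simp
  have ec : (q - 1) * r.eval q = ((q - 1) / (m - (q - 1))) * ((m - (q - 1)) * r.eval q) := by
    field_simp
  have ed : (q - 1 - m) * r.eval q = -((m - (q - 1)) * r.eval q) := by ring
  simp only [eval_mul, eval_pow, eval_sub, eval_X, eval_one, eval_C]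
  rw [ed, heo.neg_pow, ec, mul_pow ((q - 1) / (m - (q - 1)))]
  rw [ea, hNo.neg_pow, mul_pow]
  linear_combination (-(b.eval q) ^ K * ((m - (q - 1)) * r.eval q) ^ E) * hq2

lemma ML {a b : ℝ[X]} (hR : Rz a b) {α β : ℝ} (hα : 1 ≤ α) (hαβ : α < β)
    (h : ∀ q ∈ Set.Ioo α β, (a.eval q + b.eval q) * b.eval q < 0) :
    ∃ a' b' : ℝ[X], Rz a' b' ∧ ∃ q ∈ Set.Ioo α β, a'.eval q + (q - 1) * b'.eval q = 0 := by
  have h' : ∀ q ∈ Set.Ioo α β, b.eval q ≠ 0 ∧ 1 < -(a.eval q / b.eval q) := by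
    intro q hq
    have h1 := h q hq
    have hb : b.eval q ≠ 0 := by
      intro hb
      simp [hb] at h1
    refine ⟨hb, ?_⟩
    have h2 : 0 < b.eval q * b.eval q := mul_self_pos.2 hb
    rw [← neg_div, ← mul_div_mul_right _ _ hb, lt_div_iff₀ h2]
    linarith
  obtain ⟨M, hM⟩ := exists_nat_gt (2 * (β - 1))
  by_contra hcon
  have key : ∀ M' : ℕ, M ≤ M' → ∀ s ∈ Set.Ioo α β, ∀ l ∈ Set.Ioo α β,
      Real.log (-(a.eval s / b.eval s)) /
        (Real.log (((M' : ℝ) + 1) - (s - 1)) - Real.log (s - 1)) =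
      Real.log (-(a.eval l / b.eval l)) /
        (Real.log (((M' : ℝ) + 1) - (l - 1)) - Real.log (l - 1)) := by
    intro M' hM' s hs l hl
    have hc : (M : ℝ) ≤ M' := Nat.cast_le.2 hM'
    apply le_antisymm
    · by_contra hlt
      exact hcon (ML0 hR hα h' M' (by linarith) hl hs (not_le.1 hlt))
    · by_contra hlt
      exact hcon (ML0 hR hα h' M' (by linarith) hs hl (not_le.1 hlt))
  obtain ⟨s, hs1, hs2⟩ := exists_between hαβ
  obtain ⟨l, hl1, hl2⟩ := exists_between hs2
  have hs : s ∈ Set.Ioo α β := ⟨hs1, hs2⟩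
  have hl : l ∈ Set.Ioo α β := ⟨hs1.trans hl1, hl2⟩
  have k1 := key M le_rfl s hs l hl
  have k2 := key (M + 1) (Nat.le_succ _) s hs l hl
  have hanti := ratio_anti ((M : ℝ) + 1) (a := s - 1) (b := l - 1)
    ⟨by linarith, by linarith⟩ ⟨by linarith, by linarith⟩ (by linarith)
  have hpos : ∀ q ∈ Set.Ioo α β, ∀ m : ℝ, (M : ℝ) + 1 ≤ m →
      0 < Real.log (m - (q - 1)) - Real.log (q - 1) := by
    rintro q ⟨hq1, hq2⟩ m hm
    have := Real.log_lt_log (show 0 < q - 1 by linarith) (show q - 1 < m - (q - 1) by linarith)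
    linarith
  have L1 := Real.log_pos (h' s hs).2
  have L2 := Real.log_pos (h' l hl).2
  have p1 := hpos s hs _ le_rfl
  have p2 := hpos l hl _ le_rfl
  have p3 := hpos s hs ((M : ℝ) + 1 + 1) (by linarith)
  have p4 := hpos l hl ((M : ℝ) + 1 + 1) (by linarith)
  push_cast at k2
  simp only at hanti
  generalize Real.log ((M : ℝ) + 1 - (s - 1)) - Real.log (s - 1) = F1 at *
  generalize Real.log ((M : ℝ) + 1 - (l - 1)) - Real.log (l - 1) = F2 at *
  generalize Real.log ((M : ℝ) + 1 + 1 - (s - 1)) - Real.log (s - 1) = G1 at *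
  generalize Real.log ((M : ℝ) + 1 + 1 - (l - 1)) - Real.log (l - 1) = G2 at *
  generalize Real.log (-(a.eval s / b.eval s)) = A1 at *
  generalize Real.log (-(a.eval l / b.eval l)) = A2 at *
  have e1 : F1 / G1 = (A1 / G1) / (A1 / F1) := by field_simp
  have e2 : F2 / G2 = (A2 / G2) / (A2 / F2) := by field_simp
  rw [e1, e2, k1, k2] at hanti
  exact lt_irrefl _ hanti

/-- Iterated gadgets: double every edge in parallel, then put two copies in series. -/
noncomputable def zz : ℕ → ℝ[X] × ℝ[X]
  | 0 => (X - 1, X - 2)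
  | n + 1 =>
    let A := (zz n).1
    let B := (zz n).2
    ((A * A) * (A * A) + (X - 1) * ((B * B) * (B * B)),
      (A * A) * (B * B) + (B * B) * (A * A) + (X - 2) * ((B * B) * (B * B)))

lemma Rz.K1 : Rz (X - 1) (X - 2) := by
  simpa using Rz.K0 1

lemma zz_Rz (n : ℕ) : Rz (zz n).1 (zz n).2 := by
  induction n with
  | zero => exact Rz.K1
  | succ n ih => exact (ih.par ih).ser (ih.par ih)

lemma zz_one (n : ℕ) : (zz n).1.eval 1 = 0 ∧ (zz n).2.eval 1 ≠ 0 := by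
  induction n with
  | zero => simp [zz]; norm_num
  | succ n ih =>
    obtain ⟨h1, h2⟩ := ih
    simp only [zz, eval_add, eval_mul, eval_sub, eval_X, eval_one, eval_ofNat, h1]
    refine ⟨by ring, ?_⟩
    norm_num [h2]

/-- Values of `q` at which the iteration hits a boundary case. -/
def Bad : Set ℝ := ⋃ n, ({q | ((zz n).1 + (zz n).2).IsRoot q} ∪
  {q | (2 * ((zz n).1 * (zz n).1) + (X - 2) * ((zz n).2 * (zz n).2)).IsRoot q})

lemma Bad_countable : Bad.Countable := by
  refine Set.countable_iUnion fun n => Set.Countable.union ?_ ?_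
  · refine (Polynomial.finite_setOfPred_isRoot ?_).countable
    intro h
    have := congrArg (eval 1) h
    simp [(zz_one n).1, (zz_one n).2] at this
  · refine (Polynomial.finite_setOfPred_isRoot ?_).countable
    intro h
    have := congrArg (eval 1) h
    simp [(zz_one n).1, (zz_one n).2] at this
    norm_num at this

lemma step_region {a b : ℝ[X]} (hR : Rz a b) {q z : ℝ} (hq1 : 1 < q) (hb : b.eval q ≠ 0)
    (ha : a.eval q = z * b.eval q) (hz : z < 0)
    (hno : ∀ a b : ℝ[X], Rz a b → 0 ≤ (a.eval q + b.eval q) * b.eval q)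
    (h1 : z ≠ -1) (h2 : 2 * z ^ 2 + q - 2 ≠ 0) : 2 * z ^ 2 + q - 2 < 0 := by
  by_contra hD
  have hD : 0 < 2 * z ^ 2 + q - 2 := lt_of_le_of_ne (not_lt.1 hD) h2.symm
  have hbb : 0 < b.eval q * b.eval q := mul_self_pos.2 hb
  have hz1 : -1 < z := by
    have := hno a b hR
    rw [ha] at this
    have h3 : 0 ≤ (z + 1) * (b.eval q * b.eval q) := by linarith
    have h4 := nonneg_of_mul_nonneg_left h3 hbb
    exact lt_of_le_of_ne (by linarith) h1.symm
  have hS := (hR.par hR).ser (hR.par hR)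
  set y := (z ^ 4 + q - 1) / (2 * z ^ 2 + q - 2) with hy
  have hy1 : 1 < y := by
    rw [hy, lt_div_iff₀ hD]
    have : 0 < 1 - z ^ 2 := by nlinarith
    nlinarith [mul_pos this this]
  obtain ⟨n, hn⟩ := pow_unbounded_of_one_lt (-1 / z) hy1
  have hn' : z * y ^ (n + 1) < -1 := by
    have h3 : -1 / z < y ^ (n + 1) :=
      hn.trans (pow_lt_pow_right₀ hy1 (Nat.lt_succ_self n))
    rw [div_lt_iff_of_neg hz] at h3
    linarith
  have := hno _ _ (hR.par (hS.pow n))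
  simp only [eval_add, eval_mul, eval_sub, eval_X, eval_one, eval_ofNat, eval_pow, ha] at this
  generalize b.eval q = B at *
  have e2 : B * B * (z * B * (z * B)) + z * B * (z * B) * (B * B) + (q - 2) * (B * B * (B * B)) =
    (2 * z ^ 2 + q - 2) * B ^ 4 := by ring
  have e2' : z * B * (z * B) * (B * B) + B * B * (z * B * (z * B)) + (q - 2) * (B * B * (B * B)) =
    (2 * z ^ 2 + q - 2) * B ^ 4 := by ring
  have e1 : z * B * (z * B) * (z * B * (z * B)) + (q - 1) * (B * B * (B * B)) =
    y * ((2 * z ^ 2 + q - 2) * B ^ 4) := by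
    have hyD : y * (2 * z ^ 2 + q - 2) = z ^ 4 + q - 1 := by rw [hy, div_mul_cancel₀ _ hD.ne']
    linear_combination (-B ^ 4) * hyD
  rw [e1, e2', mul_pow y] at this
  set T := ((2 * z ^ 2 + q - 2) * B ^ 4) ^ (n + 1) with hT
  have hT0 : 0 < T * T * (B * B) := by
    have : T ≠ 0 := pow_ne_zero _ (mul_ne_zero hD.ne' (pow_ne_zero _ hb))
    exact mul_pos (mul_self_pos.2 this) hbb
  have h5 : 0 ≤ (z * y ^ (n + 1) + 1) * (T * T * (B * B)) := by linarith
  have := nonneg_of_mul_nonneg_left h5 hT0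
  linarith

lemma exists_low {q : ℝ} (hq : 32 / 27 < q) (hq2 : q < 2) (hbad : q ∉ Bad) :
    ∃ a b : ℝ[X], Rz a b ∧ (a.eval q + b.eval q) * b.eval q < 0 := by
  by_contra hcon
  have hno : ∀ a b : ℝ[X], Rz a b → 0 ≤ (a.eval q + b.eval q) * b.eval q := by
    intro a b h
    by_contra h'
    exact hcon ⟨a, b, h, not_le.1 h'⟩
  let z : ℕ → ℝ := fun n => (zz n).1.eval q / (zz n).2.eval q
  have hreg : ∀ n, (zz n).2.eval q ≠ 0 → z n < 0 → 2 * (z n) ^ 2 + q - 2 < 0 := by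
    intro n hb hz
    have ha : (zz n).1.eval q = z n * (zz n).2.eval q := by
      simp only [z]
      field_simp
    refine step_region (zz_Rz n) (by linarith) hb ha hz hno ?_ ?_
    · intro h
      apply hbad
      refine Set.mem_iUnion.2 ⟨n, Or.inl ?_⟩
      simp [ha, h]
    · intro h
      apply hbad
      refine Set.mem_iUnion.2 ⟨n, Or.inr ?_⟩
      simp [ha]
      linear_combination ((zz n).2.eval q) ^ 2 * h
  have hrec : ∀ n, (zz n).2.eval q ≠ 0 → 2 * (z n) ^ 2 + q - 2 < 0 →
      (zz (n + 1)).2.eval q ≠ 0 ∧ z (n + 1) * (2 * (z n) ^ 2 + q - 2) = (z n) ^ 4 + q - 1 := by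
    intro n hb hD
    have ha : (zz n).1.eval q = z n * (zz n).2.eval q := by
      simp only [z]
      field_simp
    have e2 : (zz (n + 1)).2.eval q = (2 * (z n) ^ 2 + q - 2) * (zz n).2.eval q ^ 4 := by
      simp only [zz, eval_add, eval_mul, eval_sub, eval_X, eval_ofNat, ha]
      ring
    have e1 : (zz (n + 1)).1.eval q = ((z n) ^ 4 + q - 1) * (zz n).2.eval q ^ 4 := by
      simp only [zz, eval_add, eval_mul, eval_sub, eval_X, eval_one, ha]
      ring
    have hne : (zz (n + 1)).2.eval q ≠ 0 := by
      rw [e2]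
      exact mul_ne_zero hD.ne (pow_ne_zero _ hb)
    refine ⟨hne, ?_⟩
    change _ / _ * _ = _
    rw [e1, e2]
    rw [mul_div_mul_right _ _ (pow_ne_zero 4 hb), div_mul_cancel₀ _ hD.ne]
  have hall : ∀ n, (zz n).2.eval q ≠ 0 ∧ z n < 0 ∧ 2 * (z n) ^ 2 + q - 2 < 0 := by
    intro n
    induction n with
    | zero =>
      have hb : (zz 0).2.eval q ≠ 0 := by
        simp [zz]
        intro h
        linarith
      have hz : z 0 < 0 := by
        simp [z, zz]
        exact div_neg_of_pos_of_neg (by linarith) (by linarith)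
      exact ⟨hb, hz, hreg 0 hb hz⟩
    | succ n ih =>
      obtain ⟨hb, hz, hD⟩ := ih
      obtain ⟨hb', hz'⟩ := hrec n hb hD
      have hz1 : z (n + 1) < 0 := by
        have : 0 < z (n + 1) * (2 * (z n) ^ 2 + q - 2) := by
          rw [hz']
          have : 0 ≤ (z n) ^ 4 := by positivity
          linarith
        exact neg_of_mul_pos_left this hD.le
      exact ⟨hb', hz1, hreg _ hb' hz1⟩
  have hcub : ∀ x : ℝ, x ≤ 0 → (x - 1) ^ 2 * (x + 1) < q := by
    intro x hx
    nlinarith [mul_nonneg (sq_nonneg (3 * x + 1)) (show 0 ≤ 5 / 3 - x by linarith)]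
  have hdec : ∀ n, z (n + 1) ≤ z n := by
    intro n
    obtain ⟨hb, hz, hD⟩ := hall n
    have h1 := (hrec n hb hD).2
    have h2 := hcub (z n) hz.le
    by_contra hlt
    have h3 : 0 < z (n + 1) - z n := by linarith
    have h4 : (z (n + 1) - z n) * (2 * (z n) ^ 2 + q - 2) < 0 := mul_neg_of_pos_of_neg h3 hD
    have h5 : 0 < (z n - 1) * ((z n - 1) ^ 2 * (z n + 1) - q) :=
      mul_pos_of_neg_of_neg (by linarith) (by linarith)
    nlinarith
  have hanti : Antitone z := antitone_nat_of_succ_le hdec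
  have hbdd : BddBelow (Set.range z) := by
    refine ⟨-1, ?_⟩
    rintro _ ⟨n, rfl⟩
    obtain ⟨hb, hz, hD⟩ := hall n
    nlinarith
  have hlim := tendsto_atTop_ciInf hanti hbdd
  set L := ⨅ n, z n with hL
  have hL0 : L ≤ 0 := (ciInf_le hbdd 0).trans (hall 0).2.1.le
  have hlim' := hlim.comp (Filter.tendsto_add_atTop_nat 1)
  have hA : Filter.Tendsto (fun n => z (n + 1) * (2 * (z n) ^ 2 + q - 2)) Filter.atTop
      (nhds (L * (2 * L ^ 2 + q - 2))) :=
    hlim'.mul ((((hlim.pow 2).const_mul 2).add_const q).sub_const 2)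
  have hB : Filter.Tendsto (fun n => (z n) ^ 4 + q - 1) Filter.atTop (nhds (L ^ 4 + q - 1)) :=
    ((hlim.pow 4).add_const q).sub_const 1
  have hAB : (fun n => z (n + 1) * (2 * (z n) ^ 2 + q - 2)) = fun n => (z n) ^ 4 + q - 1 :=
    funext fun n => (hrec n (hall n).1 (hall n).2.2).2
  rw [hAB] at hA
  have hEq := tendsto_nhds_unique hA hB
  have h5 : 0 < (L - 1) * ((L - 1) ^ 2 * (L + 1) - q) :=
    mul_pos_of_neg_of_neg (by linarith) (by linarith [hcub L hL0])
  nlinarith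

lemma exists_high {a b : ℝ} (hab : a < b) (hb : 2 < b) :
    ∃ q ∈ Set.Ioo a b, ∃ A B : ℝ[X], Rz A B ∧ (A.eval q + B.eval q) * B.eval q < 0 := by
  have hdense : Dense (Set.range ((↑) : ℤ → ℝ))ᶜ := (Set.countable_range _).dense_compl ℝ
  obtain ⟨q, hqZ, hq1, hq2⟩ := hdense.exists_between (max_lt hab hb)
  have hqa := (le_max_left _ _).trans_lt hq1
  have hq2' := (le_max_right _ _).trans_lt hq1
  have hqZ' : ∀ l : ℤ, q ≠ l := fun l h => hqZ ⟨l, h.symm⟩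
  refine ⟨q, ⟨hqa, hq2⟩, ?_⟩
  obtain ⟨r, hr, hr0⟩ := Rz.K ⌊q - 1⌋₊
  have h1 := Nat.floor_le (show 0 ≤ q - 1 by linarith)
  have h2 := Nat.lt_floor_add_one (q - 1)
  have h3 : (1 : ℝ) ≤ (⌊q - 1⌋₊ : ℝ) := by
    exact_mod_cast Nat.le_floor (by push_cast; linarith)
  have h4 : (⌊q - 1⌋₊ : ℝ) ≠ q - 1 := by
    intro h
    apply hqZ' (⌊q - 1⌋₊ + 1)
    push_cast
    linarith
  have h5 := lt_of_le_of_ne h1 h4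
  refine ⟨_, _, hr, ?_⟩
  have h6 : 0 < r.eval q * r.eval q := mul_self_pos.2 (hr0 q hqZ')
  simp only [eval_mul, eval_sub, eval_X, eval_one, eval_C]
  generalize (⌊q - 1⌋₊ : ℝ) = k at *
  have h7 : 0 < (2 * (q - 1) - (k + 1)) * ((k + 1) - (q - 1)) :=
    mul_pos (by linarith) (by linarith)
  have h8 := mul_pos h7 h6
  nlinarith

/-- Thomassen. For every pair of real numbers `a, b` with
`32/27 ≤ a < b`, there exist a finite graph `G` (with chromatic polynomial `P`, the
unique polynomial counting proper colourings at every positive integer) and a real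
number `q` with `a < q < b` such that `P(G,q) = 0`. -/
theorem exists_chromatic_root_in_interval (a b : ℝ) (ha : 32 / 27 ≤ a) (hab : a < b) :
    ∃ (n : ℕ) (G : SimpleGraph (Fin n)) (P : Polynomial ℝ),
      (∀ k : ℕ, 0 < k →
        P.eval (k : ℝ) =
          Nat.card {f : Fin n → Fin k // ∀ u v, G.Adj u v → f u ≠ f v}) ∧
      ∃ q : ℝ, a < q ∧ q < b ∧ P.eval q = 0 := by
  have h1 : ∃ q ∈ Set.Ioo a b, ∃ A B : ℝ[X], Rz A B ∧ (A.eval q + B.eval q) * B.eval q < 0 := by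
    rcases lt_or_ge 2 b with hb | hb
    · exact exists_high hab hb
    · obtain ⟨q, hq, hq1, hq2⟩ := (Bad_countable.dense_compl ℝ).exists_between hab
      exact ⟨q, ⟨hq1, hq2⟩, exists_low (by linarith) (by linarith) hq⟩
  obtain ⟨q, hq, A, B, hR, hneg⟩ := h1
  have hopen : IsOpen (Set.Ioo a b ∩ {x | (A.eval x + B.eval x) * B.eval x < 0}) :=
    isOpen_Ioo.inter (isOpen_lt ((A.continuous.add B.continuous).mul B.continuous)
      continuous_const)
  obtain ⟨α, β, hαβ, hsub⟩ := (mem_nhds_iff_exists_Ioo_subset.1 (hopen.mem_nhds ⟨hq, hneg⟩))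
  have hlt : α < β := hαβ.1.trans hαβ.2
  have hα : a ≤ α := by
    by_contra h
    have h : α < a := not_le.1 h
    have : a ∈ Set.Ioo α β := ⟨h, hq.1.trans hαβ.2⟩
    exact lt_irrefl _ (hsub this).1.1
  obtain ⟨a', b', hR', x, hx, hx0⟩ := ML hR (by linarith) hlt (fun x hx => (hsub hx).2)
  obtain ⟨n, G, hG⟩ := hR'.root
  have hxab := (hsub hx).1
  refine ⟨n, G, X * (a' + (X - 1) * b'), hG, x, hxab.1, hxab.2, ?_⟩
  simp [hx0]
end

section
/- If G is a finite loopless planar graph, then P(G,q) > 0 for every real number q ≥ 5. -/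
/-- `H` is a minor of `G`: there is a family of nonempty, pairwise-disjoint,
connected branch sets in `G` indexed by the vertices of `H`, such that adjacent
vertices of `H` have adjacent branch sets. -/
def SimpleGraph.HasMinor {V W : Type} (G : SimpleGraph V) (H : SimpleGraph W) : Prop :=
  ∃ B : W → Set V,
    (∀ w, (G.induce (B w)).Connected) ∧
    (Pairwise fun w w' => Disjoint (B w) (B w')) ∧
    ∀ ⦃w w'⦄, H.Adj w w' → ∃ u ∈ B w, ∃ v ∈ B w', G.Adj u v

open Classical in
/-- Contract `v` into `u`. -/
def contr {V : Type} (G : SimpleGraph V) (v u : V) : SimpleGraph {x // x ≠ v} where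
  Adj x y := x ≠ y ∧ (G.Adj x y ∨ (x.1 = u ∧ G.Adj v y) ∨ (y.1 = u ∧ G.Adj v x))
  symm := ⟨by
    rintro x y ⟨h, h'⟩
    refine ⟨h.symm, ?_⟩
    rcases h' with h' | h' | h'
    · exact Or.inl h'.symm
    · exact Or.inr (Or.inr h')
    · exact Or.inr (Or.inl h')⟩
  loopless := ⟨fun x h => h.1 rfl⟩

theorem hasMinor_trans {U V W : Type} {G : SimpleGraph U} {H : SimpleGraph V}
    {K : SimpleGraph W} (h1 : G.HasMinor H) (h2 : H.HasMinor K) : G.HasMinor K := by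
  obtain ⟨B, hB, hBd, hBa⟩ := h1
  obtain ⟨C, hC, hCd, hCa⟩ := h2
  refine ⟨fun w => {x | ∃ v ∈ C w, x ∈ B v}, ?_, ?_, ?_⟩
  · intro w
    set S : Set U := {x | ∃ v ∈ C w, x ∈ B v} with hS
    have hin : ∀ v (hv : v ∈ C w) a b (ha : a ∈ B v) (hb : b ∈ B v),
        (G.induce S).Reachable ⟨a, v, hv, ha⟩ ⟨b, v, hv, hb⟩ := by
      intro v hv a b ha hb
      have := (hB v).preconnected ⟨a, ha⟩ ⟨b, hb⟩
      exact this.map (SimpleGraph.induceHomOfLE G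
        (show B v ≤ S from fun x hx => ⟨v, hv, hx⟩)).toHom
    have key : ∀ p q : C w, (H.induce (C w)).Reachable p q → ∀ a b (ha : a ∈ B p.1)
        (hb : b ∈ B q.1), (G.induce S).Reachable ⟨a, p.1, p.2, ha⟩ ⟨b, q.1, q.2, hb⟩ := by
      rintro p q ⟨W⟩
      induction W with
      | nil => intro a b ha hb; exact hin _ (Subtype.property _) a b ha hb
      | @cons p r q hpr _ ih =>
        intro a b ha hb
        have hpr' : H.Adj p.1 r.1 := hpr
        obtain ⟨x, hx, y, hy, hxy⟩ := hBa hpr'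
        have e : (G.induce S).Adj ⟨x, p.1, p.2, hx⟩ ⟨y, r.1, r.2, hy⟩ := hxy
        exact ((hin _ p.2 a x ha hx).trans e.reachable).trans (ih y b hy hb)
    rw [SimpleGraph.connected_iff]
    constructor
    · rintro ⟨a, p, hp, ha⟩ ⟨b, q, hq, hb⟩
      exact key ⟨p, hp⟩ ⟨q, hq⟩ ((hC w).preconnected _ _) a b ha hb
    · obtain ⟨⟨p, hp⟩⟩ := (hC w).nonempty
      obtain ⟨⟨a, ha⟩⟩ := (hB p).nonempty
      exact ⟨⟨a, p, hp, ha⟩⟩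
  · intro w w' hw
    rw [Set.disjoint_left]
    rintro x ⟨p, hp, hx⟩ ⟨q, hq, hx'⟩
    have hpq : p ≠ q := by
      rintro rfl
      exact Set.disjoint_left.1 (hCd hw) hp hq
    exact Set.disjoint_left.1 (hBd hpq) hx hx'
  · intro w w' hw
    obtain ⟨p, hp, q, hq, hpq⟩ := hCa hw
    obtain ⟨x, hx, y, hy, hxy⟩ := hBa hpq
    exact ⟨x, ⟨p, hp, hx⟩, y, ⟨q, hq, hy⟩, hxy⟩

theorem hasMinor_of_inj {V W : Type} {G : SimpleGraph V} {H : SimpleGraph W} (f : W → V)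
    (hf : Function.Injective f) (h : ∀ x y, H.Adj x y → G.Adj (f x) (f y)) : G.HasMinor H := by
  refine ⟨fun w => {f w}, ?_, ?_, ?_⟩
  · intro w
    rw [SimpleGraph.connected_iff]
    refine ⟨?_, ⟨⟨f w, rfl⟩⟩⟩
    rintro ⟨a, rfl⟩ ⟨b, rfl⟩
    exact SimpleGraph.Reachable.refl _
  · intro w w' hw
    simpa using fun h => hw (hf h)
  · intro w w' hw
    exact ⟨_, rfl, _, rfl, h _ _ hw⟩

theorem hasMinor_contr {V : Type} {G : SimpleGraph V} {v u : V} (h : G.Adj v u) :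
    G.HasMinor (contr G v u) := by
  refine ⟨fun w => {x | x = w.1 ∨ (w.1 = u ∧ x = v)}, ?_, ?_, ?_⟩
  · intro w
    rw [SimpleGraph.connected_iff]
    refine ⟨?_, ⟨⟨w.1, Or.inl rfl⟩⟩⟩
    have key : ∀ a : {x | x = w.1 ∨ (w.1 = u ∧ x = v)},
        (G.induce {x | x = w.1 ∨ (w.1 = u ∧ x = v)}).Reachable a ⟨w.1, Or.inl rfl⟩ := by
      rintro ⟨a, rfl | ⟨ha, rfl⟩⟩
      · exact SimpleGraph.Reachable.refl _
      · apply SimpleGraph.Adj.reachable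
        have h' : G.Adj a w.1 := by rw [ha]; exact h
        exact h'
    intro a b
    exact (key a).trans (key b).symm
  · intro w w' hw
    rw [Set.disjoint_left]
    have : w.1 ≠ w'.1 := fun h => hw (Subtype.ext h)
    have := w.2
    have := w'.2
    rintro x (hx | hx) (hx' | hx') <;> grind
  · rintro w w' ⟨hw, h1 | h1 | h1⟩
    · exact ⟨w.1, Or.inl rfl, w'.1, Or.inl rfl, h1⟩
    · exact ⟨v, Or.inr ⟨h1.1, rfl⟩, w'.1, Or.inl rfl, h1.2⟩
    · exact ⟨w.1, Or.inl rfl, v, Or.inr ⟨h1.1, rfl⟩, h1.2.symm⟩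

def K5F {V : Type} (G : SimpleGraph V) : Prop := ¬ G.HasMinor (⊤ : SimpleGraph (Fin 5))

theorem K5F.minor {V W : Type} {G : SimpleGraph V} {H : SimpleGraph W} (hG : K5F G)
    (h : G.HasMinor H) : K5F H := fun h' => hG (hasMinor_trans h h')

theorem K5F.mono {V : Type} {G H : SimpleGraph V} (hG : K5F G) (h : H ≤ G) : K5F H :=
  hG.minor (hasMinor_of_inj id Function.injective_id fun _ _ a => h a)

theorem K5F.contr {V : Type} {G : SimpleGraph V} (hG : K5F G) {v u : V} (h : G.Adj v u) :
    K5F (contr G v u) := hG.minor (hasMinor_contr h)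

theorem K5F.cliqueFree {V : Type} {G : SimpleGraph V} (hG : K5F G) : G.CliqueFree 5 := by
  by_contra h
  have f := SimpleGraph.topEmbeddingOfNotCliqueFree h
  exact hG (hasMinor_of_inj f f.injective fun x y a => f.toHom.map_adj a)

theorem K5F.five {V : Type} {G : SimpleGraph V} (hG : K5F G) {a b c d e : V}
    (h1 : G.Adj a b) (h2 : G.Adj a c) (h3 : G.Adj a d) (h4 : G.Adj a e)
    (h5 : G.Adj b c) (h6 : G.Adj b d) (h7 : G.Adj b e)
    (h8 : G.Adj c d) (h9 : G.Adj c e) (h10 : G.Adj d e) : False := by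
  classical
  refine hG.cliqueFree {a, b, c, d, e} ?_
  rw [SimpleGraph.isNClique_iff]
  constructor
  · intro x hx y hy hxy
    simp at hx hy
    rcases hx with rfl | rfl | rfl | rfl | rfl <;> rcases hy with rfl | rfl | rfl | rfl | rfl <;>
      first | exact absurd rfl hxy | assumption | (apply SimpleGraph.Adj.symm; assumption)
  · have := h1.ne; have := h2.ne; have := h3.ne; have := h4.ne; have := h5.ne
    have := h6.ne; have := h7.ne; have := h8.ne; have := h9.ne; have := h10.ne
    simp_all

open Classical in
theorem edges_contr {V : Type} [Fintype V] (G : SimpleGraph V) (v u : V) (huv : u ≠ v) :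
    G.edgeFinset.card ≤ (contr G v u).edgeFinset.card + 1 +
      (G.neighborFinset v ∩ G.neighborFinset u).card := by
  set E := G.edgeFinset \ (insert s(v, u) ((G.neighborFinset v ∩ G.neighborFinset u).image
    (fun y => s(v, y)))) with hE
  have h1 : G.edgeFinset.card ≤ E.card + (1 + (G.neighborFinset v ∩ G.neighborFinset u).card) := by
    have := Finset.le_card_sdiff (insert s(v, u)
      ((G.neighborFinset v ∩ G.neighborFinset u).image (fun y => s(v, y)))) G.edgeFinset
    rw [← hE] at this
    have h2 := Finset.card_insert_le s(v, u)
      ((G.neighborFinset v ∩ G.neighborFinset u).image (fun y => s(v, y)))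
    have h3 := Finset.card_image_le (s := G.neighborFinset v ∩ G.neighborFinset u)
      (f := fun y => s(v, y))
    omega
  let π : V → {x // x ≠ v} := fun x => if h : x = v then ⟨u, huv⟩ else ⟨x, h⟩
  have hπ : ∀ x, (π x).1 = if x = v then u else x := by
    intro x; by_cases h : x = v <;> simp [π, h]
  have h2 : E.card ≤ (contr G v u).edgeFinset.card := by
    apply Finset.card_le_card_of_injOn (Sym2.map π)
    · intro e he
      induction e with | h x y =>
      simp only [hE, Finset.coe_sdiff, Set.mem_sdiff, Finset.mem_coe, SimpleGraph.mem_edgeFinset,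
        SimpleGraph.mem_edgeSet, Finset.mem_insert, Finset.mem_image, Finset.mem_inter,
        SimpleGraph.mem_neighborFinset, not_or, not_exists, not_and, Sym2.map_mk] at he ⊢
      obtain ⟨hxy, hn, hc⟩ := he
      have := hxy.ne
      have := hxy.symm
      have a1 := hπ x
      have a2 := hπ y
      have := hc x
      have := hc y
      simp only [Sym2.eq_iff] at *
      show π x ≠ π y ∧ (G.Adj (π x) (π y) ∨ ((π x).1 = u ∧ G.Adj v (π y)) ∨
        ((π y).1 = u ∧ G.Adj v (π x)))
      rw [Ne, Subtype.ext_iff, a1, a2]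
      by_cases hx : x = v <;> by_cases hy : y = v <;> grind
    · intro e he e' he' hee
      induction e with | h x y =>
      induction e' with | h z w =>
      simp only [hE, Finset.coe_sdiff, Set.mem_sdiff, Finset.mem_coe, SimpleGraph.mem_edgeFinset,
        SimpleGraph.mem_edgeSet, Finset.mem_insert, Finset.mem_image, Finset.mem_inter,
        SimpleGraph.mem_neighborFinset, not_or, not_exists, not_and, Sym2.map_mk] at he he' hee
      obtain ⟨hxy, hn, hc⟩ := he
      obtain ⟨hxy', hn', hc'⟩ := he'
      have := hxy.ne
      have := hxy.symm
      have := hxy'.ne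
      have := hxy'.symm
      have := hc x
      have := hc y
      have := hc' z
      have := hc' w
      simp only [Sym2.eq_iff, Subtype.ext_iff, hπ] at *
      by_cases hx : x = v <;> by_cases hy : y = v <;> by_cases hz : z = v <;>
        by_cases hw : w = v <;> grind
  omega

theorem natCard_ne {V : Type} [Finite V] (v : V) : Nat.card {x // x ≠ v} + 1 = Nat.card V := by
  classical
  have := Fintype.ofFinite V
  have h : 0 < Fintype.card V := Fintype.card_pos_iff.2 ⟨v⟩
  rw [Nat.card_eq_fintype_card, Nat.card_eq_fintype_card]
  simp only [ne_eq, Fintype.card_subtype_compl, Fintype.card_unique]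
  omega

open Classical in
theorem edge_bound (n : ℕ) : ∀ (V : Type) [Fintype V] (G : SimpleGraph V), Nat.card V = n →
    1 ≤ n → K5F G → G.edgeFinset.card + 2 ≤ 3 * n := by
  induction n using Nat.strong_induction_on with
  | _ n ih =>
  intro V _ G0 hn hn1 hG0
  by_contra hcon
  obtain ⟨E, hEs, hEc⟩ := Finset.exists_subset_card_eq
    (show 3 * n - 1 ≤ G0.edgeFinset.card by omega)
  obtain ⟨G, hle, hGc⟩ : ∃ G : SimpleGraph V, G ≤ G0 ∧ G.edgeFinset.card = 3 * n - 1 := by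
    refine ⟨SimpleGraph.fromEdgeSet (E : Set (Sym2 V)), ?_, ?_⟩
    · intro x y hxy
      have := hEs (Finset.mem_coe.1 (SimpleGraph.fromEdgeSet_adj _ |>.1 hxy).1)
      simpa using this
    · rw [← hEc]
      congr 1
      ext e
      simp only [SimpleGraph.mem_edgeFinset, SimpleGraph.edgeSet_fromEdgeSet, Set.mem_sdiff,
        Finset.mem_coe]
      refine ⟨fun h => h.1, fun h => ⟨h, ?_⟩⟩
      exact G0.not_isDiag_of_mem_edgeSet (by simpa using hEs h)
  have hG := hG0.mono hle
  obtain ⟨v, hv⟩ : ∃ v, G.degree v ≤ 5 := by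
    by_contra! h
    have h1 := G.sum_degrees_eq_twice_card_edges
    have h2 : ∑ _v : V, 6 ≤ ∑ v, G.degree v := Finset.sum_le_sum fun v _ => h v
    rw [Finset.sum_const, Finset.card_univ, ← Nat.card_eq_fintype_card, hn] at h2
    simp at h2
    omega
  have hcard := natCard_ne v
  have htri : ∀ u w, G.Adj u w → 3 ≤ (G.neighborFinset u ∩ G.neighborFinset w).card := by
    intro u w huw
    by_contra! h
    have h1 := edges_contr G u w huw.ne.symm
    have hc := natCard_ne u
    have : Nonempty {x // x ≠ u} := ⟨⟨w, huw.ne.symm⟩⟩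
    have hp : 0 < Nat.card {x // x ≠ u} := Nat.card_pos
    have := ih (Nat.card {x // x ≠ u}) (by omega) _ (contr G u w) rfl (by omega) (hG.contr huw)
    omega
  rcases Nat.eq_zero_or_pos (G.degree v) with h0 | h0
  · have hiso : ∀ y, ¬ G.Adj v y := by
      intro y hy
      rw [← SimpleGraph.card_neighborFinset_eq_degree, Finset.card_eq_zero] at h0
      have : y ∈ G.neighborFinset v := by simpa using hy
      simp [h0] at this
    rcases Nat.lt_or_ge 1 n with h1 | h1
    · have hp : 0 < Nat.card {x // x ≠ v} := by omega
      obtain ⟨⟨u, huv⟩⟩ : Nonempty {x // x ≠ v} := (Nat.card_pos_iff.1 hp).1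
      have h2 := edges_contr G v u huv
      have h3 : G.neighborFinset v = ∅ := by
        rwa [← SimpleGraph.card_neighborFinset_eq_degree, Finset.card_eq_zero] at h0
      rw [h3, Finset.empty_inter, Finset.card_empty] at h2
      have := ih (Nat.card {x // x ≠ v}) (by omega) _ (contr G v u) rfl (by omega)
        (hG.minor (hasMinor_of_inj (H := contr G v u) Subtype.val Subtype.val_injective (by
          rintro x y ⟨_, h | h | h⟩
          · exact h
          · exact absurd h.2 (hiso _)
          · exact absurd h.2 (hiso _))))
      omega
    · have h2 := G.sum_degrees_eq_twice_card_edges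
      have hs : Subsingleton V := (Finite.card_le_one_iff_subsingleton).1 (by omega)
      have h3 : ∑ w, G.degree w = 0 := by
        apply Finset.sum_eq_zero
        intro w _
        rw [Subsingleton.elim w v, h0]
      omega
  set N := G.neighborFinset v with hN
  have hNd : N.card = G.degree v := SimpleGraph.card_neighborFinset_eq_degree _ _
  have hNm : ∀ x, x ∈ N ↔ G.Adj v x := fun x => by simp [hN]
  have hsub : ∀ u ∈ N, N ∩ G.neighborFinset u ⊆ N.erase u := by
    intro u hu x hx
    simp only [Finset.mem_inter, SimpleGraph.mem_neighborFinset, Finset.mem_erase] at hx ⊢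
    exact ⟨hx.2.ne.symm, hx.1⟩
  have hN4 : 4 ≤ N.card := by
    obtain ⟨u, hu⟩ := Finset.card_pos.1 (hNd ▸ h0)
    have h1 := htri v u ((hNm u).1 hu)
    rw [← hN] at h1
    have h2 := Finset.card_le_card (hsub u hu)
    rw [Finset.card_erase_of_mem hu] at h2
    omega
  by_cases hcl : ∀ x ∈ N, ∀ y ∈ N, x ≠ y → G.Adj x y
  · obtain ⟨M, hM, hMc⟩ := Finset.exists_subset_card_eq hN4
    refine hG.cliqueFree (insert v M) ?_
    rw [SimpleGraph.isNClique_iff]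
    constructor
    · intro x hx y hy hxy
      simp only [Finset.coe_insert, Set.mem_insert_iff, Finset.mem_coe] at hx hy
      rcases hx with rfl | hx <;> rcases hy with rfl | hy
      · exact absurd rfl hxy
      · exact (hNm _).1 (hM hy)
      · exact ((hNm _).1 (hM hx)).symm
      · exact hcl x (hM hx) y (hM hy) hxy
    · rw [Finset.card_insert_of_notMem, hMc]
      intro h
      exact G.loopless.irrefl v ((hNm v).1 (hM h))
  push Not at hcl
  obtain ⟨a, ha, b, hb, hab, hnab⟩ := hcl
  -- every vertex of N has at most one non-neighbour in N
  have hone : ∀ u ∈ N, ∀ x ∈ N, ∀ y ∈ N, x ≠ y → u ≠ x → u ≠ y → ¬ G.Adj u x → G.Adj u y := by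
    intro u hu x hx y hy hxy hux huy hnx
    by_contra hny
    have h1 := htri v u ((hNm u).1 hu)
    rw [← hN] at h1
    have h2 : N ∩ G.neighborFinset u ⊆ ((N.erase u).erase x).erase y := by
      intro z hz
      have := hsub u hu hz
      simp only [Finset.mem_inter, SimpleGraph.mem_neighborFinset, Finset.mem_erase] at hz this ⊢
      refine ⟨?_, ?_, this⟩
      · rintro rfl; exact hny hz.2
      · rintro rfl; exact hnx hz.2
    have h3 := Finset.card_le_card h2
    rw [Finset.card_erase_of_mem (by simp [hy, hxy.symm, huy.symm]),
      Finset.card_erase_of_mem (by simp [hx, hux.symm]), Finset.card_erase_of_mem hu] at h3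
    omega
  have hN5 : N.card = 5 := by
    have h1 := htri v a ((hNm a).1 ha)
    rw [← hN] at h1
    have h2 : N ∩ G.neighborFinset a ⊆ (N.erase a).erase b := by
      intro z hz
      have := hsub a ha hz
      simp only [Finset.mem_inter, SimpleGraph.mem_neighborFinset, Finset.mem_erase] at hz this ⊢
      refine ⟨?_, this⟩
      rintro rfl; exact hnab hz.2
    have h3 := Finset.card_le_card h2
    rw [Finset.card_erase_of_mem (by simp [hb, hab.symm]), Finset.card_erase_of_mem ha] at h3
    omega
  have hR : ((N.erase a).erase b).card = 3 := by
    rw [Finset.card_erase_of_mem (by simp [hb, hab.symm]), Finset.card_erase_of_mem ha]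
    omega
  obtain ⟨c, d, e, hcd, hce, hde, hR⟩ := Finset.card_eq_three.1 hR
  have hmem : ∀ z, z ∈ ({c, d, e} : Finset V) → z ≠ b ∧ z ≠ a ∧ z ∈ N := by
    intro z hz
    rw [← hR] at hz
    simpa [Finset.mem_erase] using hz
  have hc := hmem c (by simp)
  have hd := hmem d (by simp)
  have he := hmem e (by simp)
  have hA : ∀ z, z ≠ b ∧ z ≠ a ∧ z ∈ N → G.Adj a z ∧ G.Adj b z := by
    rintro z ⟨h1, h2, h3⟩
    exact ⟨hone a ha b hb z h3 h1.symm hab h2.symm hnab,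
      hone b hb a ha z h3 h2.symm hab.symm h1.symm fun h => hnab h.symm⟩
  have fin : ∀ c d e, c ≠ d → c ≠ e → d ≠ e → c ≠ b ∧ c ≠ a ∧ c ∈ N → d ≠ b ∧ d ≠ a ∧ d ∈ N →
      e ≠ b ∧ e ≠ a ∧ e ∈ N → G.Adj c d → False := by
    intro c d e hcd hce hde hc hd he hadj
    have hva : v ≠ a := ((hNm a).1 ha).ne
    have lift : ∀ x y (hx : x ≠ a) (hy : y ≠ a), G.Adj x y →
        (contr G a e).Adj ⟨x, hx⟩ ⟨y, hy⟩ := fun x y hx hy h =>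
      ⟨fun h' => h.ne (Subtype.ext_iff.1 h'), Or.inl h⟩
    have lift2 : ∀ y (hy : y ≠ a), e ≠ y → G.Adj a y →
        (contr G a e).Adj ⟨y, hy⟩ ⟨e, he.2.1⟩ := fun y hy hey h =>
      ⟨fun h' => hey (Subtype.ext_iff.1 h').symm, Or.inr (Or.inr ⟨rfl, h⟩)⟩
    refine (hG.contr (hA e he).1).five (a := ⟨v, hva⟩) (b := ⟨b, hab.symm⟩) (c := ⟨c, hc.2.1⟩)
      (d := ⟨d, hd.2.1⟩) (e := ⟨e, he.2.1⟩) ?_ ?_ ?_ ?_ ?_ ?_ ?_ ?_ ?_ ?_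
    · exact lift _ _ _ _ ((hNm _).1 hb)
    · exact lift _ _ _ _ ((hNm _).1 hc.2.2)
    · exact lift _ _ _ _ ((hNm _).1 hd.2.2)
    · exact lift _ _ _ _ ((hNm _).1 he.2.2)
    · exact lift _ _ _ _ (hA c hc).2
    · exact lift _ _ _ _ (hA d hd).2
    · exact lift _ _ _ _ (hA e he).2
    · exact lift _ _ _ _ hadj
    · exact lift2 _ _ hce.symm (hA c hc).1
    · exact lift2 _ _ hde.symm (hA d hd).1
  by_cases hadj : G.Adj c d
  · exact fin c d e hcd hce hde hc hd he hadj
  · exact fin c e d hce hcd hde.symm hc he hd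
      (hone c hc.2.2 d hd.2.2 e he.2.2 hde hcd hce hadj)

open Classical in
theorem exists_degree_le_five {V : Type} [Fintype V] [Nonempty V] (G : SimpleGraph V)
    (hG : K5F G) : ∃ v, G.degree v ≤ 5 := by
  by_contra! h
  have h0 := edge_bound (Nat.card V) V G rfl Nat.card_pos hG
  have h1 := G.sum_degrees_eq_twice_card_edges
  have h2 : ∑ _v : V, 6 ≤ ∑ v, G.degree v := Finset.sum_le_sum fun v _ => h v
  rw [Finset.sum_const, Finset.card_univ, ← Nat.card_eq_fintype_card] at h2
  simp at h2 h0
  omega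

/-- Number of proper `k`-colourings. -/
noncomputable def cnt {V : Type} (G : SimpleGraph V) (k : ℕ) : ℕ :=
  Nat.card {f : V → Fin k // ∀ u v, G.Adj u v → f u ≠ f v}

/-- `H` is `G` with the edge `vu` removed. -/
theorem cnt_delContr {V : Type} [Finite V] {G H : SimpleGraph V} {v u : V} (h : G.Adj v u)
    (hH : ∀ x y, H.Adj x y ↔ G.Adj x y ∧ ¬ (x = v ∧ y = u ∨ x = u ∧ y = v)) (k : ℕ) :
    cnt H k = cnt G k + cnt (contr G v u) k := by
  classical
  unfold cnt
  rw [← Nat.card_sum]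
  have huv : u ≠ v := h.ne.symm
  apply Nat.card_congr
  refine ⟨fun f => if hf : f.1 v = f.1 u then
      Sum.inr ⟨fun x => f.1 x.1, ?_⟩ else Sum.inl ⟨f.1, ?_⟩,
    fun s => s.elim (fun f => ⟨f.1, ?_⟩)
      (fun f => ⟨fun x => if hx : x = v then f.1 ⟨u, huv⟩ else f.1 ⟨x, hx⟩, ?_⟩), ?_, ?_⟩
  · rintro ⟨x, hx⟩ ⟨y, hy⟩ ⟨hxy, h1⟩
    have hxy' : x ≠ y := fun h => hxy (Subtype.ext h)
    have hf2 := f.2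
    rcases h1 with h1 | ⟨h1, h2⟩ | ⟨h1, h2⟩
    · exact f.2 x y ((hH x y).2 ⟨h1, by simp [hx, hy]⟩)
    · simp only at h1 h2 ⊢
      subst h1
      rw [← hf]
      exact f.2 v y ((hH v y).2 ⟨h2, by grind⟩)
    · simp only at h1 h2 ⊢
      subst h1
      rw [← hf]
      exact (f.2 v x ((hH v x).2 ⟨h2, by grind⟩)).symm
  · intro x y hxy
    by_cases hc : x = v ∧ y = u ∨ x = u ∧ y = v
    · rcases hc with ⟨rfl, rfl⟩ | ⟨rfl, rfl⟩
      · exact hf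
      · exact fun h => hf h.symm
    · exact f.2 x y ((hH x y).2 ⟨hxy, hc⟩)
  · intro x y hxy
    exact f.2 x y ((hH x y).1 hxy).1
  · intro x y hxy
    obtain ⟨h1, h2⟩ := (hH x y).1 hxy
    have hne := h1.ne
    by_cases hx : x = v <;> by_cases hy : y = v
    · grind
    · simp only [hx, hy, dite_true, dite_false]
      apply f.2
      subst hx
      exact ⟨by grind, Or.inr (Or.inl ⟨rfl, h1⟩)⟩
    · simp only [hx, hy, dite_true, dite_false]
      apply f.2
      subst hy
      exact ⟨by grind, Or.inr (Or.inr ⟨rfl, h1.symm⟩)⟩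
    · simp only [hx, hy, dite_false]
      apply f.2
      exact ⟨by grind, Or.inl h1⟩
  · intro f
    by_cases hf : f.1 v = f.1 u
    · simp only [hf, dite_true, Sum.elim_inr]
      ext x
      by_cases hx : x = v
      · subst hx; simp [hf]
      · simp [hx]
    · simp only [hf, dite_false, Sum.elim_inl]
  · rintro (f | f)
    · have : f.1 v ≠ f.1 u := f.2 v u h
      simp [this]
    · refine (dif_pos (by simp [huv])).trans ?_
      apply congrArg Sum.inr
      apply Subtype.ext
      funext x
      simp [x.2]

theorem cnt_isolated {V : Type} [Finite V] {G : SimpleGraph V} {v : V} (h : ∀ y, ¬ G.Adj v y)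
    (H : SimpleGraph {x // x ≠ v}) (hH : ∀ x y, H.Adj x y ↔ G.Adj x.1 y.1) (k : ℕ) :
    cnt G k = k * cnt H k := by
  classical
  unfold cnt
  have hk : k = Nat.card (Fin k) := by simp
  conv_rhs => lhs; rw [hk]
  rw [← Nat.card_prod]
  apply Nat.card_congr
  refine ⟨fun f => (f.1 v, ⟨fun x => f.1 x.1, fun x y hxy => f.2 _ _ ((hH x y).1 hxy)⟩),
    fun p => ⟨fun x => if hx : x = v then p.1 else p.2.1 ⟨x, hx⟩, ?_⟩, ?_, ?_⟩
  · intro x y hxy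
    by_cases hx : x = v
    · subst hx; exact absurd hxy (h y)
    by_cases hy : y = v
    · subst hy; exact absurd hxy.symm (h x)
    simp only [hx, hy, dite_false]
    exact p.2.2 _ _ ((hH _ _).2 hxy)
  · intro f
    ext x
    by_cases hx : x = v
    · subst hx; simp
    · simp [hx]
  · rintro ⟨c, f⟩
    refine Prod.ext (by simp) ?_
    ext x
    simp [x.2]

/-- Delete the edge `vu`. -/
def delE {V : Type} (G : SimpleGraph V) (v u : V) : SimpleGraph V where
  Adj x y := G.Adj x y ∧ ¬ (x = v ∧ y = u ∨ x = u ∧ y = v)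
  symm := ⟨by
    rintro x y ⟨h, h'⟩
    exact ⟨h.symm, by tauto⟩⟩
  loopless := ⟨fun x h => G.loopless.irrefl x h.1⟩

theorem delE_lt {V : Type} {G : SimpleGraph V} {v u : V} (h : G.Adj v u) : delE G v u < G := by
  rw [lt_iff_le_not_ge]
  refine ⟨fun x y h => h.1, fun h' => ?_⟩
  exact (h' h).2 (Or.inl ⟨rfl, rfl⟩)

theorem exists_chrom (n : ℕ) : ∀ (V : Type) [Finite V] (G : SimpleGraph V), Nat.card V = n →
    ∃ P : Polynomial ℝ, ∀ k : ℕ, 0 < k → P.eval (k : ℝ) = cnt G k := by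
  induction n using Nat.strong_induction_on with
  | _ n ih =>
  intro V _ G hn
  induction G using WellFoundedLT.induction with
  | _ G ihG =>
  by_cases hG : ∃ v u, G.Adj v u
  · obtain ⟨v, u, h⟩ := hG
    obtain ⟨P, hP⟩ := ihG (delE G v u) (delE_lt h)
    have hc := natCard_ne v
    obtain ⟨Q, hQ⟩ := ih (Nat.card {x // x ≠ v}) (by omega) _ (contr G v u) rfl
    refine ⟨P - Q, fun k hk => ?_⟩
    rw [Polynomial.eval_sub, hP k hk, hQ k hk,
      cnt_delContr h (H := delE G v u) (fun x y => Iff.rfl)]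
    push_cast; ring
  · refine ⟨Polynomial.X ^ n, fun k hk => ?_⟩
    push Not at hG
    have : cnt G k = Nat.card (V → Fin k) := by
      unfold cnt
      exact Nat.card_congr (Equiv.subtypeUnivEquiv fun f u v h => absurd h (hG u v))
    rw [this, Nat.card_fun]
    simp [hn]

/-- The chromatic polynomial. -/
noncomputable def chrom {V : Type} [Finite V] (G : SimpleGraph V) : Polynomial ℝ :=
  (exists_chrom (Nat.card V) V G rfl).choose

theorem chrom_spec {V : Type} [Finite V] (G : SimpleGraph V) (k : ℕ) (hk : 0 < k) :
    (chrom G).eval (k : ℝ) = cnt G k :=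
  (exists_chrom (Nat.card V) V G rfl).choose_spec k hk

theorem poly_ext {P Q : Polynomial ℝ} (h : ∀ k : ℕ, 0 < k → P.eval (k : ℝ) = Q.eval (k : ℝ)) :
    P = Q := by
  apply Polynomial.eq_of_infinite_eval_eq
  refine Set.Infinite.mono (s := (fun k : ℕ => (k : ℝ)) '' Set.Ioi 0) ?_ ?_
  · rintro _ ⟨k, hk, rfl⟩
    exact h k hk
  · exact (Set.Ioi_infinite 0).image Nat.cast_injective.injOn

theorem chrom_delContr {V : Type} [Finite V] {G H : SimpleGraph V} {v u : V} (h : G.Adj v u)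
    (hH : ∀ x y, H.Adj x y ↔ G.Adj x y ∧ ¬ (x = v ∧ y = u ∨ x = u ∧ y = v)) :
    chrom H = chrom G + chrom (contr G v u) := by
  apply poly_ext
  intro k hk
  rw [Polynomial.eval_add, chrom_spec _ k hk, chrom_spec _ k hk, chrom_spec _ k hk,
    cnt_delContr h hH]
  push_cast; rfl

theorem chrom_isolated {V : Type} [Finite V] {G : SimpleGraph V} {v : V} (h : ∀ y, ¬ G.Adj v y)
    (H : SimpleGraph {x // x ≠ v}) (hH : ∀ x y, H.Adj x y ↔ G.Adj x.1 y.1) :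
    chrom G = Polynomial.X * chrom H := by
  apply poly_ext
  intro k hk
  rw [Polynomial.eval_mul, Polynomial.eval_X, chrom_spec _ k hk, chrom_spec _ k hk,
    cnt_isolated h H hH]
  push_cast; rfl

/-- Adding edges decreases the value, provided smaller graphs have positive value. -/
theorem chrom_mono {V : Type} [Finite V] (q : ℝ)
    (ih : ∀ v : V, ∀ H : SimpleGraph {x // x ≠ v}, K5F H → 0 < (chrom H).eval q)
    (H G : SimpleGraph V) (hG : K5F G) (hle : H ≤ G) :
    (chrom G).eval q ≤ (chrom H).eval q ∧ (H ≠ G → (chrom G).eval q < (chrom H).eval q) := by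
  induction G using WellFoundedLT.induction with
  | _ G ihG =>
  by_cases hne : H = G
  · subst hne; exact ⟨le_rfl, fun h => absurd rfl h⟩
  suffices (chrom G).eval q < (chrom H).eval q from ⟨this.le, fun _ => this⟩
  obtain ⟨v, u, h, h'⟩ : ∃ v u, G.Adj v u ∧ ¬ H.Adj v u := by
    by_contra! hc
    exact hne (le_antisymm hle fun v u h => hc v u h)
  have h1 := (ihG (delE G v u) (delE_lt h) (hG.mono (delE_lt h).le) (by
    intro x y hxy
    refine ⟨hle hxy, ?_⟩
    rintro (⟨rfl, rfl⟩ | ⟨rfl, rfl⟩)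
    · exact h' hxy
    · exact h' hxy.symm)).1
  have h2 := ih v _ (hG.contr h)
  rw [chrom_delContr h (H := delE G v u) (fun _ _ => Iff.rfl), Polynomial.eval_add] at h1
  linarith

/-- Keep only those edges at `v` that go to `T`. -/
def starG {V : Type} (G : SimpleGraph V) (v : V) (T : Finset V) : SimpleGraph V where
  Adj x y := G.Adj x y ∧ (x = v → y ∈ T) ∧ (y = v → x ∈ T)
  symm := ⟨by
    rintro x y ⟨h, h', h''⟩
    exact ⟨h.symm, h'', h'⟩⟩
  loopless := ⟨fun x h => G.loopless.irrefl x h.1⟩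

theorem chrom_pos (q : ℝ) (hq : 5 ≤ q) (n : ℕ) : ∀ (V : Type) [Finite V] (G : SimpleGraph V),
    Nat.card V = n → K5F G → 0 < (chrom G).eval q := by
  classical
  induction n using Nat.strong_induction_on with
  | _ n ih =>
  intro V _ G hn hG
  have := Fintype.ofFinite V
  rcases isEmpty_or_nonempty V with hV | hV
  · have : chrom G = 1 := by
      apply poly_ext
      intro k hk
      rw [chrom_spec _ k hk]
      have : Unique {f : V → Fin k // ∀ u v, G.Adj u v → f u ≠ f v} :=
        ⟨⟨⟨fun x => hV.elim x, fun u => hV.elim u⟩⟩, fun f => by ext x; exact hV.elim x⟩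
      simp [cnt]
    simp [this]
  obtain ⟨v, hv⟩ := exists_degree_le_five G hG
  set D : SimpleGraph {x // x ≠ v} := G.comap Subtype.val with hD
  have hcard := natCard_ne v
  have hDF : K5F D := hG.minor (hasMinor_of_inj Subtype.val Subtype.val_injective fun _ _ h => h)
  have hDpos : 0 < (chrom D).eval q := ih _ (by omega) _ D rfl hDF
  have ih2 : ∀ v' : {x // x ≠ v}, ∀ H : SimpleGraph {x // x ≠ v'}, K5F H →
      0 < (chrom H).eval q := by
    intro v' H hH
    have := natCard_ne v'
    exact ih _ (by omega) _ H rfl hH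
  have hsF : ∀ T, K5F (starG G v T) := fun T => hG.mono fun x y h => h.1
  have step : ∀ (T : Finset V) (u : V), u ∉ T → G.Adj v u →
      (chrom (starG G v T)).eval q = (chrom (starG G v (insert u T))).eval q +
        (chrom (contr (starG G v (insert u T)) v u)).eval q ∧
      (chrom (contr (starG G v (insert u T)) v u)).eval q ≤ (chrom D).eval q ∧
      (D ≠ contr (starG G v (insert u T)) v u →
        (chrom (contr (starG G v (insert u T)) v u)).eval q < (chrom D).eval q) := by
    intro T u hu huv
    have hadj : (starG G v (insert u T)).Adj v u :=
      ⟨huv, fun _ => by simp, fun h => absurd h huv.ne.symm⟩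
    refine ⟨?_, ?_⟩
    · rw [← Polynomial.eval_add, ← chrom_delContr hadj]
      intro x y
      have := G.loopless.irrefl
      simp only [starG, Finset.mem_insert]
      have h1 := huv.ne
      constructor
      · rintro ⟨h, h2, h3⟩
        refine ⟨⟨h, fun e => Or.inr (h2 e), fun e => Or.inr (h3 e)⟩, ?_⟩
        rintro (⟨rfl, rfl⟩ | ⟨rfl, rfl⟩)
        · exact hu (h2 rfl)
        · exact hu (h3 rfl)
      · rintro ⟨⟨h, h2, h3⟩, h4⟩
        refine ⟨h, fun e => ?_, fun e => ?_⟩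
        · rcases h2 e with h5 | h5
          · exact absurd (Or.inl ⟨e, h5⟩) h4
          · exact h5
        · rcases h3 e with h5 | h5
          · exact absurd (Or.inr ⟨h5, e⟩) h4
          · exact h5
    · apply chrom_mono q ih2 D _ ((hsF _).contr hadj)
      intro x y hxy
      have hxy' : G.Adj x.1 y.1 := hxy
      exact ⟨hxy.ne, Or.inl ⟨hxy', fun h => absurd h x.2, fun h => absurd h y.2⟩⟩
  have main : ∀ T : Finset V, T ⊆ G.neighborFinset v →
      (q - T.card) * (chrom D).eval q ≤ (chrom (starG G v T)).eval q := by
    intro T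
    induction T using Finset.induction_on with
    | empty =>
      intro _
      rw [chrom_isolated (G := starG G v ∅) (v := v) (fun y h => absurd (h.2.1 rfl) (by simp)) D]
      · simp
      · intro x y
        refine ⟨fun h => ⟨h, fun h => absurd h x.2, fun h => absurd h y.2⟩, fun h => h.1⟩
    | insert u T hu ihT =>
      intro hT
      have h1 := ihT fun x hx => hT (Finset.mem_insert_of_mem hx)
      have h2 := step T u hu (by simpa using hT (Finset.mem_insert_self u T))
      rw [Finset.card_insert_of_notMem hu]
      push_cast
      linarith [h2.1, h2.2.1]
  have hfull : starG G v (G.neighborFinset v) = G := by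
    ext x y
    simp only [starG, SimpleGraph.mem_neighborFinset]
    refine ⟨fun h => h.1, fun h => ⟨h, ?_, ?_⟩⟩
    · rintro rfl; exact h
    · rintro rfl; exact h.symm
  have hdeg : (G.neighborFinset v).card = G.degree v := SimpleGraph.card_neighborFinset_eq_degree _ _
  rcases Nat.lt_or_ge (G.degree v) 5 with h5 | h5
  · have h1 := main _ subset_rfl
    rw [hfull, hdeg] at h1
    have h2 : (G.degree v : ℝ) < 5 := by exact_mod_cast h5
    exact lt_of_lt_of_le (mul_pos (by linarith) hDpos) h1
  have h5 : G.degree v = 5 := le_antisymm hv h5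
  obtain ⟨a, ha, b, hb, hab, hnab⟩ : ∃ a ∈ G.neighborFinset v, ∃ b ∈ G.neighborFinset v,
      a ≠ b ∧ ¬ G.Adj a b := by
    by_contra! hc
    refine hG.cliqueFree (G.neighborFinset v) ?_
    rw [SimpleGraph.isNClique_iff]
    exact ⟨fun x hx y hy hxy => hc x (by simpa using hx) y (by simpa using hy) hxy, by omega⟩
  have h1 := main ((G.neighborFinset v).erase a) (Finset.erase_subset _ _)
  have h2 := step ((G.neighborFinset v).erase a) a (by simp) (by simpa using ha)
  rw [Finset.card_erase_of_mem ha, hdeg, h5] at h1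
  rw [Finset.insert_erase ha, hfull] at h2
  have hav : a ≠ v := by rintro rfl; simp at ha
  have hbv : b ≠ v := by rintro rfl; simp at hb
  have h3 := h2.2.2 (by
    intro heq
    have : (contr G v a).Adj ⟨a, hav⟩ ⟨b, hbv⟩ :=
      ⟨fun h => hab (Subtype.ext_iff.1 h), Or.inr (Or.inl ⟨rfl, by simpa using hb⟩)⟩
    rw [← heq] at this
    exact hnab this)
  have h4 := mul_nonneg (sub_nonneg.2 hq) hDpos.le
  norm_num at h1
  linarith [h2.1]

/-- Birkhoff–Lewis. If `G` is a finite loopless planar graph (planar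
by Wagner's theorem: no `K₅` minor and no `K_{3,3}` minor), with chromatic polynomial
`P` (the unique polynomial counting proper colourings at every positive integer), then
`P(G,q) > 0` for every real `q ≥ 5`. -/
theorem chromatic_polynomial_pos_of_planar {V : Type} [Fintype V] (G : SimpleGraph V)
    (hK5 : ¬ G.HasMinor (⊤ : SimpleGraph (Fin 5)))
    (hK33 : ¬ G.HasMinor (completeBipartiteGraph (Fin 3) (Fin 3)))
    (P : Polynomial ℝ)
    (hP : ∀ k : ℕ, 0 < k →
      P.eval (k : ℝ) = Nat.card {f : V → Fin k // ∀ u v, G.Adj u v → f u ≠ f v}) :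
    ∀ q : ℝ, 5 ≤ q → 0 < P.eval q := by
  intro q hq
  have : P = chrom G := poly_ext fun k hk => by rw [hP k hk, chrom_spec G k hk]; rfl
  rw [this]
  exact chrom_pos q hq _ V G rfl hK5
end
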